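/- Uniform lower bound for the algebraic entropy (Corollary 1.2(i)): For all real P0, r0, δ > 0 there exists a constant C0 > 0, depending only on P0, r0 and δ, such that for every δ-hyperbolic GCB-space (X,σ) which is P0-packed at scale r0 and every finitely generated, non-elementary, discrete group Γ of σ-isometries of X, the algebraic entropy satisfies EntAlg(Γ) ≥ C0. -/

import Mathlib

open Metric Filter

/-- Four-points condition for `δ`-hyperbolicity. -/
def IsDeltaHyperbolic (X : Type*) [MetricSpace X] (δ : ℝ) : Prop :=
  ∀ x y z w : X,
    dist x y + dist z w ≤ max (dist x z + dist y w) (dist x w + dist y z) + 2 * δ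

/-- `X` is `P₀`-packed at scale `r₀`: any subset of a closed ball of radius `3r₀` whose
points are pairwise at distance `> 2r₀` has cardinality at most `P₀`. -/
def IsPacked (X : Type*) [MetricSpace X] (P₀ r₀ : ℝ) : Prop :=
  ∀ x : X, ∀ S : Finset X, (↑S ⊆ closedBall x (3 * r₀)) →
    (∀ a ∈ S, ∀ b ∈ S, a ≠ b → 2 * r₀ < dist a b) → (S.card : ℝ) ≤ P₀

/-- A geodesically complete, convex, consistent, reversible geodesic bicombing on `X`.
Together with completeness of `X` this is the notion of GCB-space. -/
structure IsGCB {X : Type*} [MetricSpace X] (σ : X → X → ℝ → X) : Prop where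
  source : ∀ x y : X, σ x y 0 = x
  target : ∀ x y : X, σ x y 1 = y
  geodesic : ∀ x y : X, ∀ t ∈ Set.Icc (0:ℝ) 1, ∀ t' ∈ Set.Icc (0:ℝ) 1,
    dist (σ x y t) (σ x y t') = |t - t'| * dist x y
  convex : ∀ x y x' y' : X,
    ConvexOn ℝ (Set.Icc (0:ℝ) 1) fun t => dist (σ x y t) (σ x' y' t)
  consistent : ∀ x y : X, ∀ s t l : ℝ, 0 ≤ s → s ≤ t → t ≤ 1 → l ∈ Set.Icc (0:ℝ) 1 →
    σ (σ x y s) (σ x y t) l = σ x y ((1 - l) * s + l * t)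
  reversible : ∀ x y : X, ∀ t ∈ Set.Icc (0:ℝ) 1, σ x y t = σ y x (1 - t)
  geodComplete : ∀ x y : X, ∃ γ : ℝ → X, Isometry γ ∧
    (∀ s t : ℝ, s ≤ t → ∀ l ∈ Set.Icc (0:ℝ) 1, σ (γ s) (γ t) l = γ (s + l * (t - s))) ∧
    (∀ t ∈ Set.Icc (0:ℝ) 1, σ x y t = γ (t * dist x y))

/-- `g` is a `σ`-isometry: a surjective isometry preserving the bicombing `σ`. -/
def IsSigmaIsometry {X : Type*} [MetricSpace X] (σ : X → X → ℝ → X) (g : X ≃ᵢ X) : Prop :=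
  ∀ x y : X, ∀ t ∈ Set.Icc (0:ℝ) 1, g (σ x y t) = σ (g x) (g y) t

/-- A group of isometries is discrete if for every `x` and `R` only finitely many of its
elements displace `x` at most `R`. -/
def IsDiscreteSubgroup {X : Type*} [MetricSpace X] (Γ : Subgroup (X ≃ᵢ X)) : Prop :=
  ∀ x : X, ∀ R : ℝ, {g : X ≃ᵢ X | g ∈ Γ ∧ dist x (g x) ≤ R}.Finite

/-- A group is virtually nilpotent if it has a nilpotent subgroup of finite index. -/
def IsVirtuallyNilpotent (G : Type*) [Group G] : Prop :=
  ∃ H : Subgroup G, H.FiniteIndex ∧ Group.IsNilpotent H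

/-- `Γ` is non-elementary: it contains two elements generating a subgroup that is not
virtually nilpotent. -/
def IsNonElementary {X : Type*} [MetricSpace X] (Γ : Subgroup (X ≃ᵢ X)) : Prop :=
  ∃ a b : X ≃ᵢ X, a ∈ Γ ∧ b ∈ Γ ∧
    ¬ IsVirtuallyNilpotent ↥(Subgroup.closure ({a, b} : Set (X ≃ᵢ X)))

/-- An isometry is non-elliptic if its orbits are unbounded. -/
def IsNonElliptic {X : Type*} [MetricSpace X] (g : X ≃ᵢ X) : Prop :=
  ∀ x : X, ¬ Bornology.IsBounded (Set.range fun n : ℤ => (g ^ n) x)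

/-- The `r`-almost stabilizer `Γ_r(x)`, generated by the elements of `Γ` displacing `x`
at most `r`. -/
def almostStabilizer {X : Type*} [MetricSpace X] (Γ : Subgroup (X ≃ᵢ X)) (r : ℝ) (x : X) :
    Subgroup (X ≃ᵢ X) :=
  Subgroup.closure {g : X ≃ᵢ X | g ∈ Γ ∧ dist x (g x) ≤ r}

/-- The nilpotence radius of `Γ` at `x`. -/
noncomputable def nilrad {X : Type*} [MetricSpace X] (Γ : Subgroup (X ≃ᵢ X)) (x : X) : ℝ :=
  sSup {r : ℝ | 0 ≤ r ∧ IsVirtuallyNilpotent ↥(almostStabilizer Γ r x)}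

/-- The Margulis domain `M_ε(g)`. -/
def margulisDomain {X : Type*} [MetricSpace X] (g : X ≃ᵢ X) (ε : ℝ) : Set X :=
  {x : X | dist x (g x) ≤ ε}

/-- The generalized Margulis domain `ℳ_ε(g) = ⋃_{i ≠ 0} M_ε(gⁱ)`. -/
def genMargulisDomain {X : Type*} [MetricSpace X] (g : X ≃ᵢ X) (ε : ℝ) : Set X :=
  ⋃ i ∈ {i : ℤ | i ≠ 0}, margulisDomain (g ^ i) ε

/-- `f` parameterizes a geodesic segment from `x` to `y` on `[0, dist x y]`. -/
def IsGeodesicFrom {X : Type*} [MetricSpace X] (f : ℝ → X) (x y : X) : Prop :=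
  f 0 = x ∧ f (dist x y) = y ∧
    ∀ s ∈ Set.Icc 0 (dist x y), ∀ t ∈ Set.Icc 0 (dist x y), dist (f s) (f t) = |s - t|

/-- `X` is a geodesic space. -/
def IsGeodesicSpace (X : Type*) [MetricSpace X] : Prop :=
  ∀ x y : X, ∃ f : ℝ → X, IsGeodesicFrom f x y

/-- `C` is `lam`-quasiconvex: any two of its points are joined by a geodesic contained in
the closed `lam`-neighbourhood of `C`. -/
def IsQuasiconvex {X : Type*} [MetricSpace X] (lam : ℝ) (C : Set X) : Prop :=
  ∀ x ∈ C, ∀ y ∈ C, ∃ f : ℝ → X, IsGeodesicFrom f x y ∧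
    ∀ t ∈ Set.Icc 0 (dist x y), infDist (f t) C ≤ lam

/-- `C` is a convex subset: any two of its points are joined by a geodesic inside `C`. -/
def IsConvexSubset {X : Type*} [MetricSpace X] (C : Set X) : Prop :=
  ∀ x ∈ C, ∀ y ∈ C, ∃ f : ℝ → X, IsGeodesicFrom f x y ∧
    ∀ t ∈ Set.Icc 0 (dist x y), f t ∈ C

/-- Arc-length concatenation of three paths, of respective lengths `d₁`, `d₂` and the rest. -/
noncomputable def concatPath {X : Type*} (d₁ d₂ : ℝ) (f₁ f₂ f₃ : ℝ → X) : ℝ → X :=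
  fun t => if t ≤ d₁ then f₁ t else if t ≤ d₁ + d₂ then f₂ (t - d₁) else f₃ (t - d₁ - d₂)

/-- Separated subsets at scale `s` of balls of radius `R` have at most `N` points. -/
def PackBound (X : Type*) [MetricSpace X] (R s : ℝ) (N : ℕ) : Prop :=
  ∀ x : X, ∀ S : Finset X, (∀ a ∈ S, dist a x ≤ R) →
    (∀ a ∈ S, ∀ b ∈ S, a ≠ b → s < dist a b) → S.card ≤ N

section Packing

variable {X : Type*} [MetricSpace X] {σ : X → X → ℝ → X}

theorem PackBound.mono {R R' s s' : ℝ} {N N' : ℕ} (h : PackBound X R s N) (hR : R' ≤ R)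
    (hs : s ≤ s') (hN : N ≤ N') : PackBound X R' s' N' := fun x S h1 h2 =>
  (h x S (fun a ha => (h1 a ha).trans hR)
    (fun a ha b hb hab => hs.trans_lt (h2 a ha b hb hab))).trans hN

theorem PackBound.exists_net_subset {R s : ℝ} {N : ℕ} (h : PackBound X R s N) (hs : 0 ≤ s) (x : X)
    (Y : Set X) (hY : ∀ y ∈ Y, dist y x ≤ R) :
    ∃ Z : Finset X, Z.card ≤ N ∧ (∀ z ∈ Z, z ∈ Y) ∧ ∀ y ∈ Y, ∃ z ∈ Z, dist y z ≤ s := by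
  classical
  let P : ℕ → Prop := fun n => ∃ Z : Finset X, Z.card = n ∧ (∀ z ∈ Z, z ∈ Y) ∧
    (∀ a ∈ Z, ∀ b ∈ Z, a ≠ b → s < dist a b)
  have hP0 : P 0 := ⟨∅, by simp⟩
  have hspec : P (Nat.findGreatest P N) := Nat.findGreatest_spec (Nat.zero_le N) hP0
  obtain ⟨Z, hZc, hZ1, hZ2⟩ := hspec
  refine ⟨Z, h x Z (fun z hz => hY z (hZ1 z hz)) hZ2, hZ1, fun y hy => ?_⟩
  by_contra! hcon
  have hyZ : y ∉ Z := fun hyZ => by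
    have := hcon y hyZ
    rw [dist_self] at this
    linarith
  have hsep : ∀ a ∈ insert y Z, ∀ b ∈ insert y Z, a ≠ b → s < dist a b := by
    intro a ha b hb hab
    rcases Finset.mem_insert.1 ha with ha | ha <;> rcases Finset.mem_insert.1 hb with hb | hb
    · exact absurd (ha.trans hb.symm) hab
    · rw [ha]; exact hcon b hb
    · rw [hb, dist_comm]; exact hcon a ha
    · exact hZ2 a ha b hb hab
  have hsub : ∀ a ∈ insert y Z, a ∈ Y := by
    intro a ha
    rcases Finset.mem_insert.1 ha with rfl | ha
    · exact hy
    · exact hZ1 a ha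
  have hP1 : P (Z.card + 1) := ⟨insert y Z, Finset.card_insert_of_notMem hyZ, hsub, hsep⟩
  have hle : Z.card + 1 ≤ N := by
    rw [← Finset.card_insert_of_notMem hyZ]
    exact h x _ (fun z hz => hY z (hsub z hz)) hsep
  have := Nat.le_findGreatest hle hP1
  omega

theorem PackBound.exists_net {R s : ℝ} {N : ℕ} (h : PackBound X R s N) (hs : 0 ≤ s) (x : X) :
    ∃ Z : Finset X, Z.card ≤ N ∧ (∀ z ∈ Z, dist z x ≤ R) ∧
      ∀ y, dist y x ≤ R → ∃ z ∈ Z, dist y z ≤ s :=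
  h.exists_net_subset hs x {y | dist y x ≤ R} fun _ hy => hy

theorem IsGCB.exists_ray (hσ : IsGCB σ) (x y : X) : ∃ γ : ℝ → X,
    γ (dist x y) = y ∧ (∀ s, 0 ≤ s → dist x (γ s) = s) ∧ (∀ s t, s ≤ t → dist (γ s) (γ t) = t - s) ∧
      ∀ t, 0 ≤ t → ∀ l ∈ Set.Icc (0 : ℝ) 1, σ x (γ t) l = γ (l * t) := by
  obtain ⟨γ, hγ, hl, ht⟩ := hσ.geodComplete x y
  have h0 : γ 0 = x := by
    have := ht 0 (by simp)
    rw [hσ.source] at this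
    simpa using this.symm
  have h1 : γ (dist x y) = y := by
    have := ht 1 (by simp)
    rw [hσ.target] at this
    simpa using this.symm
  have h2 : ∀ s t, s ≤ t → dist (γ s) (γ t) = t - s := fun s t hst => by
    rw [hγ.dist_eq, Real.dist_eq, abs_sub_comm, abs_of_nonneg (by linarith)]
  refine ⟨γ, h1, fun s hs => ?_, h2, fun t ht l hl' => ?_⟩
  · have := h2 0 s hs
    rwa [h0, sub_zero] at this
  · have := hl 0 t ht l hl'
    rwa [h0, zero_add, sub_zero] at this

theorem IsGCB.extend (hσ : IsGCB σ) (x y : X) {c : ℝ} (hc : 1 ≤ c) :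
    ∃ z, dist x z = c * dist x y ∧ σ x z (1 / c) = y := by
  obtain ⟨γ, h1, h2, -, h4⟩ := hσ.exists_ray x y
  have hd := dist_nonneg (x := x) (y := y)
  refine ⟨γ (c * dist x y), h2 _ (by positivity), ?_⟩
  rw [h4 _ (by positivity) _ ⟨by positivity, by rw [div_le_one (by linarith)]; exact hc⟩,
    one_div, inv_mul_cancel_left₀ (by positivity), h1]

theorem IsGCB.extend_to (hσ : IsGCB σ) (x y : X) {L : ℝ} (hL : 0 < L) (hxy : dist x y ≤ L) :
    ∃ z, dist x z = L ∧ dist y z = L - dist x y ∧ σ x z (dist x y / L) = y := by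
  obtain ⟨γ, h1, h2, h3, h4⟩ := hσ.exists_ray x y
  have hd := dist_nonneg (x := x) (y := y)
  refine ⟨γ L, h2 _ hL.le, ?_, ?_⟩
  · have := h3 _ _ hxy
    rwa [h1] at this
  · rw [h4 _ hL.le _ ⟨by positivity, by rw [div_le_one hL]; exact hxy⟩,
      div_mul_cancel₀ _ hL.ne', h1]

theorem IsGCB.dist_le (hσ : IsGCB σ) (x y x' y' : X) {t : ℝ} (ht : t ∈ Set.Icc (0 : ℝ) 1) :
    dist (σ x y t) (σ x' y' t) ≤ (1 - t) * dist x x' + t * dist y y' := by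
  have := (hσ.convex x y x' y').2 (Set.left_mem_Icc.2 zero_le_one)
    (Set.right_mem_Icc.2 zero_le_one) (sub_nonneg.2 ht.2) ht.1 (by ring)
  simpa [hσ.source, hσ.target] using this

theorem IsGCB.dist_left (hσ : IsGCB σ) (x y : X) {t : ℝ} (ht : t ∈ Set.Icc (0 : ℝ) 1) :
    dist x (σ x y t) = t * dist x y := by
  have := hσ.geodesic x y 0 (by simp) t ht
  rwa [hσ.source, zero_sub, abs_neg, abs_of_nonneg ht.1] at this

theorem IsGCB.dist_right (hσ : IsGCB σ) (x y : X) {t : ℝ} (ht : t ∈ Set.Icc (0 : ℝ) 1) :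
    dist (σ x y t) y = (1 - t) * dist x y := by
  have := hσ.geodesic x y t ht 1 (by simp)
  rwa [hσ.target, abs_sub_comm, abs_of_nonneg (by linarith [ht.2])] at this

theorem IsGCB.exists_between (hσ : IsGCB σ) (x y : X) {R : ℝ} (hR : 0 ≤ R) (h : R ≤ dist x y) :
    ∃ p, dist x p = R ∧ dist p y = dist x y - R := by
  rcases (dist_nonneg (x := x) (y := y)).eq_or_lt with h0 | h0
  · exact ⟨x, by rw [dist_self]; linarith, by linarith⟩
  · have ht : R / dist x y ∈ Set.Icc (0 : ℝ) 1 :=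
      ⟨by positivity, by rw [div_le_one h0]; exact h⟩
    refine ⟨σ x y (R / dist x y), ?_, ?_⟩
    · rw [hσ.dist_left x y ht]; field_simp
    · rw [hσ.dist_right x y ht]; field_simp

theorem IsGCB.exists_pull (hσ : IsGCB σ) (x y : X) {R ρ : ℝ} (hR : 0 ≤ R) (hρ : 0 ≤ ρ)
    (h : dist x y ≤ R + ρ) : ∃ p, dist x p ≤ R ∧ dist p y ≤ ρ := by
  rcases le_total (dist x y) R with h1 | h1
  · exact ⟨y, h1, by rw [dist_self]; exact hρ⟩
  · obtain ⟨p, hp, hq⟩ := hσ.exists_between x y hR h1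
    exact ⟨p, hp.le, by linarith⟩

variable {P r : ℝ}

theorem packBound_small (hσ : IsGCB σ) (hr : 0 < r) (hP : IsPacked X P r) {ρ s : ℝ}
    (hρ : 0 < ρ) (hρr : ρ ≤ 3 * r) (hs : 2 / 3 * ρ ≤ s) : PackBound X ρ s ⌊P⌋₊ := by
  classical
  intro x S h1 h2
  set c := 3 * r / ρ with hc
  have hc1 : 1 ≤ c := by rw [hc, le_div_iff₀ hρ]; linarith
  have hc0 : 0 < c := by linarith
  choose e he1 he3 using fun y => hσ.extend x y hc1
  have hexp : ∀ a b, c * dist a b ≤ dist (e a) (e b) := by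
    intro a b
    have := hσ.dist_le x (e a) x (e b) (t := 1 / c)
      ⟨by positivity, by rw [div_le_one hc0]; exact hc1⟩
    rw [he3, he3, dist_self, mul_zero, zero_add, one_div, inv_mul_eq_div, le_div_iff₀ hc0] at this
    linarith
  have hsep : ∀ a ∈ S, ∀ b ∈ S, a ≠ b → 2 * r < dist (e a) (e b) := by
    intro a ha b hb hab
    refine lt_of_lt_of_le ?_ (hexp a b)
    have h3 := h2 a ha b hb hab
    have : c * (2 / 3 * ρ) = 2 * r := by rw [hc]; field_simp
    rw [← this]
    exact mul_lt_mul_of_pos_left (by linarith) hc0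
  have hinj : Set.InjOn e S := by
    intro a ha b hb hab
    by_contra hne
    have := hsep a ha b hb hne
    rw [hab, dist_self] at this
    linarith
  rw [← Finset.card_image_of_injOn hinj]
  refine Nat.le_floor (hP x _ ?_ ?_)
  · intro z hz
    simp only [Finset.coe_image, Set.mem_image, Finset.mem_coe] at hz
    obtain ⟨a, ha, rfl⟩ := hz
    rw [mem_closedBall, dist_comm, he1, dist_comm]
    calc c * dist a x ≤ c * ρ := by gcongr; exact h1 a ha
      _ = 3 * r := by rw [hc]; field_simp
  · intro a ha b hb hab
    obtain ⟨a', ha', rfl⟩ := Finset.mem_image.1 ha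
    obtain ⟨b', hb', rfl⟩ := Finset.mem_image.1 hb
    exact hsep a' ha' b' hb' (fun h => hab (by rw [h]))

theorem PackBound.enlarge (hσ : IsGCB σ) {R ρ s s' R' : ℝ} {N N' : ℕ} (h : PackBound X R s N)
    (h' : PackBound X R' s' N') (hR : 0 ≤ R) (hρ : 0 ≤ ρ) (hs : 0 ≤ s) (hR' : ρ + s ≤ R') :
    PackBound X (R + ρ) s' (N * N') := by
  classical
  intro x S h1 h2
  obtain ⟨Z, hZ, hZ1, hZ2⟩ := h.exists_net hs x
  have key : ∀ a, ∃ z, a ∈ S → z ∈ Z ∧ dist a z ≤ R' := by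
    intro a
    by_cases ha : a ∈ S
    · obtain ⟨p, hp1, hp2⟩ := hσ.exists_pull x a hR hρ (by rw [dist_comm]; exact h1 a ha)
      obtain ⟨z, hz, hpz⟩ := hZ2 p (by rw [dist_comm]; exact hp1)
      refine ⟨z, fun _ => ⟨hz, ?_⟩⟩
      linarith [dist_triangle a p z, dist_comm a p]
    · exact ⟨x, fun h => absurd h ha⟩
  choose f hf using key
  have := Finset.card_le_mul_card_image_of_maps_to (f := f) (s := S) (t := Z)
    (fun a ha => (hf a ha).1) N' (fun b hb => ?_)
  · calc S.card ≤ N' * Z.card := this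
      _ ≤ N' * N := by gcongr
      _ = N * N' := mul_comm _ _
  · refine h' b _ ?_ ?_
    · intro a ha
      rw [Finset.mem_filter] at ha
      rw [← ha.2]
      exact (hf a ha.1).2
    · intro a ha a' ha' hne
      exact h2 a (Finset.mem_filter.1 ha).1 a' (Finset.mem_filter.1 ha').1 hne

end Packing

theorem exists_packing_function (P r : ℝ) (hr : 0 < r) :
    ∃ pk : ℝ → ℝ → ℕ, ∀ (X : Type*) [MetricSpace X] (σ : X → X → ℝ → X), IsGCB σ →
      IsPacked X P r → ∀ R s, 0 < s → PackBound X R s (pk R s) := by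
  have key : ∀ R s : ℝ, ∃ N : ℕ, 0 < s → ∀ (X : Type _) [MetricSpace X] (σ : X → X → ℝ → X),
      IsGCB σ → IsPacked X P r → PackBound X R s N := by
    intro R s
    by_cases hs : 0 < s
    swap
    · exact ⟨0, fun h => absurd h hs⟩
    obtain ⟨k, hk⟩ := exists_nat_ge (R / r)
    have hk : R ≤ k * r := by rwa [div_le_iff₀ hr] at hk
    obtain ⟨j, hj⟩ := exists_pow_lt_of_lt_one (show 0 < s / (2 * r) by positivity)
      (show (2 / 3 : ℝ) < 1 by norm_num)
    have hj : (2 / 3 : ℝ) ^ j * (2 * r) < s := by rwa [lt_div_iff₀ (by positivity)] at hj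
    refine ⟨⌊P⌋₊ * ⌊P⌋₊ ^ k * ⌊P⌋₊ ^ j, fun _ X _ σ hσ hP => ?_⟩
    have h0 : PackBound X (3 * r) (2 * r) ⌊P⌋₊ :=
      packBound_small hσ hr hP (by positivity) le_rfl (by linarith)
    have h1 : ∀ k : ℕ, PackBound X (3 * r + k * r) (2 * r) (⌊P⌋₊ * ⌊P⌋₊ ^ k) := by
      intro k
      induction k with
      | zero => simpa using h0
      | succ k ih =>
        have := ih.enlarge hσ h0 (ρ := r) (by positivity) hr.le (by positivity) (by linarith)
        refine this.mono ?_ le_rfl ?_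
        · push_cast; linarith
        · rw [pow_succ, mul_assoc]
    have h2 : ∀ j : ℕ, PackBound X (3 * r + k * r) ((2 / 3 : ℝ) ^ j * (2 * r))
        (⌊P⌋₊ * ⌊P⌋₊ ^ k * ⌊P⌋₊ ^ j) := by
      intro j
      induction j with
      | zero => simpa using h1 k
      | succ j ih =>
        have hle : (2 / 3 : ℝ) ^ j ≤ 1 := pow_le_one₀ (by norm_num) (by norm_num)
        have h3 : PackBound X ((2 / 3 : ℝ) ^ j * (2 * r)) ((2 / 3 : ℝ) ^ (j + 1) * (2 * r)) ⌊P⌋₊ :=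
          packBound_small hσ hr hP (by positivity) (by nlinarith) (by rw [pow_succ]; linarith)
        have := ih.enlarge hσ h3 (ρ := 0) (by positivity) le_rfl (by positivity) (by linarith)
        refine this.mono (by linarith) le_rfl ?_
        rw [pow_succ, mul_assoc]
    exact (h2 j).mono (by linarith) hj.le le_rfl
  choose pk hpk using key
  exact ⟨pk, fun X _ σ hσ hP R s hs => hpk R s hs X σ hσ hP⟩

/-- The isometry `u` moves the points of the closed ball of centre `x` and radius `r`
by at most `M`. -/
def MovesLE {X : Type*} [MetricSpace X] (u : X ≃ᵢ X) (x : X) (r M : ℝ) : Prop :=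
  ∀ y, dist y x ≤ r → dist y (u y) ≤ M

section Displacement

variable {X : Type*} [MetricSpace X] {σ : X → X → ℝ → X}

theorem IsSigmaIsometry.one : IsSigmaIsometry σ (1 : X ≃ᵢ X) := fun _ _ _ _ => rfl

theorem IsSigmaIsometry.mul {g h : X ≃ᵢ X} (hg : IsSigmaIsometry σ g) (hh : IsSigmaIsometry σ h) :
    IsSigmaIsometry σ (g * h) := fun x y t ht => by
  simp only [IsometryEquiv.mul_apply]
  rw [hh x y t ht, hg _ _ t ht]

theorem IsSigmaIsometry.pow {g : X ≃ᵢ X} (hg : IsSigmaIsometry σ g) (n : ℕ) :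
    IsSigmaIsometry σ (g ^ n) := by
  induction n with
  | zero => rw [pow_zero]; exact .one
  | succ n ih => rw [pow_succ]; exact ih.mul hg

theorem dist_self_mul_le (g h : X ≃ᵢ X) (p : X) :
    dist p ((g * h) p) ≤ dist p (g p) + dist p (h p) := by
  rw [IsometryEquiv.mul_apply]
  calc dist p (g (h p)) ≤ dist p (g p) + dist (g p) (g (h p)) := dist_triangle _ _ _
    _ = _ := by rw [g.dist_eq]

theorem dist_self_inv (g : X ≃ᵢ X) (p : X) : dist p (g⁻¹ p) = dist p (g p) := by
  have := g.dist_eq p (g⁻¹ p)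
  rw [IsometryEquiv.apply_inv_self] at this
  rw [← this, dist_comm]

theorem dist_self_pow_le (g : X ≃ᵢ X) (n : ℕ) (p : X) :
    dist p ((g ^ n) p) ≤ n * dist p (g p) := by
  induction n with
  | zero => simp
  | succ n ih =>
    rw [pow_succ]
    have := dist_self_mul_le (g ^ n) g p
    push_cast
    linarith

theorem dist_conj (g h : X ≃ᵢ X) (p : X) :
    dist p ((g * h * g⁻¹) p) = dist (g⁻¹ p) (h (g⁻¹ p)) := by
  rw [IsometryEquiv.mul_apply, IsometryEquiv.mul_apply]
  conv_lhs => rw [← IsometryEquiv.apply_inv_self g p]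
  rw [g.dist_eq]
  simp

theorem IsGCB.displacement_le (hσ : IsGCB σ) {f h : X ≃ᵢ X} (hf : IsSigmaIsometry σ f)
    (hh : IsSigmaIsometry σ h) (y z : X) {t : ℝ} (ht : t ∈ Set.Icc (0 : ℝ) 1) :
    dist (f (σ y z t)) (h (σ y z t)) ≤ (1 - t) * dist (f y) (h y) + t * dist (f z) (h z) := by
  rw [hf y z t ht, hh y z t ht]
  exact hσ.dist_le _ _ _ _ ht

theorem IsGCB.displacement_sub_le (hσ : IsGCB σ) {f h : X ≃ᵢ X} (hf : IsSigmaIsometry σ f)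
    (hh : IsSigmaIsometry σ h) {y : X} {ρ M : ℝ} (hρ : 0 < ρ)
    (hM : ∀ w, dist w y ≤ ρ → dist (f w) (h w) ≤ M) (z : X) :
    dist (f y) (h y) - dist (f z) (h z) ≤ dist y z / ρ * M := by
  have hd := dist_nonneg (x := z) (y := y)
  have hL : 0 < dist z y + ρ := by linarith
  obtain ⟨w, -, hw2, hw3⟩ := hσ.extend_to z y hL (by linarith)
  have hwM := hM w (by rw [dist_comm]; linarith)
  have hyM := hM y (by simp [hρ.le])
  have := hσ.displacement_le hf hh z w (t := dist z y / (dist z y + ρ))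
    ⟨by positivity, by rw [div_le_one hL]; linarith⟩
  rw [hw3] at this
  have h1 : 1 - dist z y / (dist z y + ρ) = ρ / (dist z y + ρ) := by field_simp; ring
  rw [h1, div_mul_eq_mul_div, div_mul_eq_mul_div, ← add_div, le_div_iff₀ hL] at this
  have h0 : 0 ≤ dist (f y) (h y) := dist_nonneg
  rw [dist_comm y z, div_mul_eq_mul_div, le_div_iff₀ hρ]
  nlinarith

theorem IsGCB.doubling (hσ : IsGCB σ) {v : X ≃ᵢ X} (hv : IsSigmaIsometry σ v) {y : X} {ρ M : ℝ}
    (hρ : 0 < ρ) (hM : MovesLE v y ρ M) :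
    dist y (v y) * (2 - M / ρ) ≤ dist y ((v * v) y) := by
  have h12 : (1 / 2 : ℝ) ∈ Set.Icc (0 : ℝ) 1 := ⟨by norm_num, by norm_num⟩
  have h1 := hσ.displacement_sub_le (f := 1) .one hv hρ hM (σ y (v y) (1 / 2))
  have h2 := hσ.dist_le (v y) y (v y) (v (v y)) h12
  rw [← hv y (v y) _ h12, hσ.reversible (v y) y _ h12] at h2
  rw [hσ.dist_left _ _ h12] at h1
  simp only [IsometryEquiv.mul_apply, IsometryEquiv.coe_one, id] at *
  norm_num at h2
  have h3 : 1 / 2 * dist y (v y) / ρ * M = dist y (v y) * (M / ρ) / 2 := by ring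
  rw [h3] at h1
  norm_num at h1
  linarith

theorem pow_two_pow_succ {G : Type*} [Monoid G] (u : G) (j : ℕ) :
    u ^ 2 ^ (j + 1) = u ^ 2 ^ j * u ^ 2 ^ j := by
  rw [← pow_add, pow_succ, mul_two]

theorem IsGCB.escape (hσ : IsGCB σ) {u : X ≃ᵢ X} (hu : IsSigmaIsometry σ u) {x : X} {r l : ℝ}
    (hl : 0 < l) {J : ℕ} (h : ∀ j < J, MovesLE (u ^ 2 ^ j) x (r + l) (l / 8)) {p : X}
    (hp : dist p x ≤ r) : dist p (u p) ≤ 2 / 2 ^ J * dist p ((u ^ 2 ^ J) p) := by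
  have hl2 : 0 < l / 2 := by linarith
  have step1 : ∀ i j, i + 1 + j = J → MovesLE (u ^ 2 ^ j) x (r + l / 2)
      (l / 4 * (4 / 7) ^ (i + 1)) := by
    intro i
    induction i with
    | zero =>
      intro j hj y hy
      have := h j (by omega) y (by linarith)
      norm_num
      linarith
    | succ i ih =>
      intro j hj y hy
      have h1 := ih (j + 1) (by omega) y hy
      have h2 := hσ.doubling (hu.pow (2 ^ j)) (y := y) hl2 (M := l / 8) (fun w hw =>
        h j (by omega) w (by linarith [dist_triangle w y x]))
      rw [← pow_two_pow_succ] at h2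
      have h3 : l / 8 / (l / 2) = 1 / 4 := by field_simp; norm_num
      rw [h3] at h2
      rw [pow_succ]
      linarith
  have step2 : ∀ i j, i + j = J → 2 ^ i * dist p ((u ^ 2 ^ j) p) * (2 / 3 + 1 / 3 * (4 / 7) ^ i) ≤
      dist p ((u ^ 2 ^ J) p) := by
    intro i
    induction i with
    | zero =>
      intro j hj
      rw [zero_add] at hj
      rw [hj]
      norm_num
    | succ i ih =>
      intro j hj
      refine le_trans ?_ (ih (j + 1) (by omega))
      have h2 := hσ.doubling (hu.pow (2 ^ j)) (y := p) hl2 (M := l / 4 * (4 / 7) ^ (i + 1))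
        (fun w hw => step1 i j (by omega) w (by linarith [dist_triangle w p x]))
      rw [← pow_two_pow_succ] at h2
      have h3 : l / 4 * (4 / 7) ^ (i + 1) / (l / 2) = 1 / 2 * (4 / 7 : ℝ) ^ (i + 1) := by
        field_simp; norm_num
      rw [h3] at h2
      have ht0 : (0 : ℝ) ≤ (4 / 7) ^ i := by positivity
      have ht1 : (4 / 7 : ℝ) ^ i ≤ 1 := pow_le_one₀ (by norm_num) (by norm_num)
      rw [pow_succ] at h2 ⊢
      rw [pow_succ (4 / 7 : ℝ)]
      generalize (4 / 7 : ℝ) ^ i = t at *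
      have hb := dist_nonneg (x := p) (y := (u ^ 2 ^ j) p)
      generalize dist p ((u ^ 2 ^ j) p) = b at *
      generalize dist p ((u ^ 2 ^ (j + 1)) p) = c at *
      have h5 : 2 * b * (2 / 3 + 1 / 3 * (t * (4 / 7))) ≤ c * (2 / 3 + 1 / 3 * t) := by
        refine le_trans ?_ (mul_le_mul_of_nonneg_right h2 (by positivity))
        nlinarith [mul_nonneg hb (mul_nonneg ht0 (sub_nonneg.2 ht1))]
      calc 2 ^ i * 2 * b * (2 / 3 + 1 / 3 * (t * (4 / 7)))
          = 2 ^ i * (2 * b * (2 / 3 + 1 / 3 * (t * (4 / 7)))) := by ring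
        _ ≤ 2 ^ i * (c * (2 / 3 + 1 / 3 * t)) := by gcongr
        _ = _ := by ring
  have h6 := step2 J 0 (by omega)
  rw [pow_zero, pow_one] at h6
  have h7 : (0 : ℝ) ≤ (4 / 7) ^ J := by positivity
  have hb := dist_nonneg (x := p) (y := u p)
  have h8 : (0 : ℝ) < 2 ^ J := by positivity
  rw [div_mul_eq_mul_div, le_div_iff₀ h8]
  nlinarith [mul_nonneg (mul_nonneg h8.le hb) h7, mul_nonneg h8.le hb]

theorem IsGCB.fixes_of_escape (hσ : IsGCB σ) {u : X ≃ᵢ X} (hu : IsSigmaIsometry σ u) {x : X}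
    {r l : ℝ} (hl : 0 < l) (h : ∀ j, MovesLE (u ^ 2 ^ j) x (r + l) (l / 8)) {p : X}
    (hp : dist p x ≤ r) : u p = p := by
  by_contra hne
  have hpos : 0 < dist p (u p) := dist_pos.2 (Ne.symm hne)
  obtain ⟨J, hJ⟩ := exists_pow_lt_of_lt_one (show 0 < dist p (u p) / l by positivity)
    (show (1 / 2 : ℝ) < 1 by norm_num)
  have h1 := hσ.escape hu hl (J := J) (fun j _ => h j) hp
  have h2 := h J p (by linarith)
  have h3 : 2 / 2 ^ J * dist p ((u ^ 2 ^ J) p) ≤ 2 / 2 ^ J * (l / 8) := by gcongr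
  rw [lt_div_iff₀ hl, one_div, inv_pow] at hJ
  have h4 : (2 : ℝ) / 2 ^ J * (l / 8) = (2 ^ J)⁻¹ * l / 4 := by ring
  have : 0 < ((2 : ℝ) ^ J)⁻¹ * l := by positivity
  linarith

end Displacement

section Convolution

variable {G : Type*} [Group G]

/-- The convolution square of a function on a group. -/
noncomputable def convSquare (ψ : G → ℝ) (k : G) : ℝ := ∑ᶠ y, ψ y * ψ (y⁻¹ * k)

theorem convSquare_mul (ψ : G → ℝ) (g k : G) :
    convSquare ψ (g * k) = ∑ᶠ y, ψ (g * y) * ψ (y⁻¹ * k) := by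
  unfold convSquare
  rw [← finsum_comp_equiv (Equiv.mulLeft g)]
  simp [mul_assoc]

theorem convSquare_second_difference {ψ : G → ℝ} (hψ : (Function.support ψ).Finite) (g h k : G) :
    convSquare ψ (g * (h * k)) - convSquare ψ (h * k) - (convSquare ψ (g * k) - convSquare ψ k) =
      ∑ᶠ y, (ψ (g * y) - ψ y) * (ψ (y⁻¹ * (h * k)) - ψ (y⁻¹ * k)) := by
  have h1 : ∀ f : G → ℝ, (Function.support fun y => ψ y * f y).Finite := fun f =>
    hψ.subset fun y hy => left_ne_zero_of_mul hy
  have hg : (Function.support fun y => ψ (g * y)).Finite :=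
    hψ.preimage (mul_right_injective g).injOn
  have h2 : ∀ f : G → ℝ, (Function.support fun y => ψ (g * y) * f y).Finite := fun f =>
    hg.subset fun y hy => left_ne_zero_of_mul hy
  have h3 : ∀ k, convSquare ψ (g * k) - convSquare ψ k =
      ∑ᶠ y, (ψ (g * y) * ψ (y⁻¹ * k) - ψ y * ψ (y⁻¹ * k)) := fun k => by
    rw [convSquare_mul, finsum_sub_distrib (h2 _) (h1 _)]
    rfl
  have h4 : ∀ k, (Function.support fun y => ψ (g * y) * ψ (y⁻¹ * k) -
      ψ y * ψ (y⁻¹ * k)).Finite := fun k =>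
    ((h2 fun y => ψ (y⁻¹ * k)).union (h1 fun y => ψ (y⁻¹ * k))).subset (Function.support_sub _ _)
  rw [h3, h3, ← finsum_sub_distrib (h4 _) (h4 _)]
  exact finsum_congr fun y => by ring

theorem abs_convSquare_second_difference_le {ψ : G → ℝ} (hψ : (Function.support ψ).Finite)
    {g h k : G} {A : Finset G} {a b : ℝ} (ha : 0 ≤ a)
    (hA : ∀ y, y ∉ A → ψ (g * y) = 0 ∧ ψ y = 0)
    (h1 : ∀ y ∈ A, |ψ (g * y) - ψ y| ≤ a)
    (h2 : ∀ y ∈ A, |ψ (y⁻¹ * (h * k)) - ψ (y⁻¹ * k)| ≤ b) :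
    |convSquare ψ (g * (h * k)) - convSquare ψ (h * k) -
      (convSquare ψ (g * k) - convSquare ψ k)| ≤ A.card * (a * b) := by
  rw [convSquare_second_difference hψ, finsum_eq_sum_of_support_subset (s := A)]
  · refine (Finset.abs_sum_le_sum_abs _ _).trans ?_
    rw [← nsmul_eq_mul]
    refine Finset.sum_le_card_nsmul _ _ _ fun y hy => ?_
    rw [abs_mul]
    exact mul_le_mul (h1 y hy) (h2 y hy) (abs_nonneg _) ha
  · intro y hy
    by_contra hyA
    obtain ⟨e1, e2⟩ := hA y hyA
    simp [e1, e2] at hy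

end Convolution

section

variable {X : Type*} [MetricSpace X]

theorem card_displacement_le {Γ : Subgroup (X ≃ᵢ X)} {q : X} {κ : ℝ} {Q : ℕ} (hκ : 0 ≤ κ)
    (hQ : PackBound X (2 * κ) (κ / 2) Q) {A B : Finset ↥Γ}
    (hA : ∀ y, y ∈ A ↔ dist q (y.1 q) ≤ 2 * κ) (hB : ∀ y, y ∈ B ↔ dist q (y.1 q) ≤ κ / 2) :
    A.card ≤ Q * B.card := by
  classical
  obtain ⟨Z, hZ, hZ1, hZ2⟩ := hQ.exists_net_subset (by positivity) q
    ((fun y : ↥Γ => y.1 q) '' A) (by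
      rintro _ ⟨y, hy, rfl⟩
      rw [dist_comm]
      exact (hA y).1 hy)
  have h1 : ∀ y, ∃ z, y ∈ A → z ∈ Z ∧ dist (y.1 q) z ≤ κ / 2 := by
    intro y
    by_cases hy : y ∈ A
    · obtain ⟨z, hz, hz'⟩ := hZ2 _ ⟨y, hy, rfl⟩
      exact ⟨z, fun _ => ⟨hz, hz'⟩⟩
    · exact ⟨q, fun h => absurd h hy⟩
  choose f hf using h1
  refine (Finset.card_le_mul_card_image_of_maps_to (f := f) (t := Z) (fun y hy => (hf y hy).1)
    B.card fun z hz => ?_).trans ?_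
  · obtain ⟨y₀, -, rfl⟩ := hZ1 z hz
    refine Finset.card_le_card_of_injOn (fun y => y₀⁻¹ * y) ?_ (mul_right_injective _).injOn
    intro y hy
    rw [Finset.mem_coe, Finset.mem_filter] at hy
    rw [Finset.mem_coe, hB]
    have := (hf y hy.1).2
    rw [hy.2] at this
    rw [← y₀.1.dist_eq]
    simp only [Subgroup.coe_mul, Subgroup.coe_inv, IsometryEquiv.mul_apply,
      IsometryEquiv.apply_inv_self]
    rwa [dist_comm]
  · rw [mul_comm]
    gcongr

theorem IsDiscreteSubgroup.exists_finset {Γ : Subgroup (X ≃ᵢ X)} (hΓ : IsDiscreteSubgroup Γ)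
    (q : X) (R : ℝ) : ∃ A : Finset ↥Γ, ∀ y, y ∈ A ↔ dist q (y.1 q) ≤ R := by
  have : {y : ↥Γ | dist q (y.1 q) ≤ R}.Finite := by
    refine Set.Finite.of_finite_image ((hΓ q R).subset ?_) Subtype.val_injective.injOn
    rintro _ ⟨y, hy, rfl⟩
    exact ⟨y.2, hy⟩
  exact ⟨this.toFinset, fun y => by simp⟩

theorem commutator_displacement {Γ : Subgroup (X ≃ᵢ X)} (hΓ : IsDiscreteSubgroup Γ) {q : X}
    {κ a b : ℝ} (hκ : 0 < κ) {Q : ℕ} (hQ : PackBound X (2 * κ) (κ / 2) Q) {g h : ↥Γ}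
    (hg : MovesLE g.1 q (2 * κ) a) (hh : MovesLE h.1 q (2 * κ) b) (ha : a ≤ κ) (hb : b ≤ κ)
    {n : ℕ} (hn : 2 * κ ≤ dist q (((g * h * g⁻¹ * h⁻¹) ^ n).1 q)) :
    κ ^ 2 ≤ 8 * Q * n * (a * b) := by
  classical
  obtain ⟨A, hA⟩ := hΓ.exists_finset q (2 * κ)
  obtain ⟨B, hB⟩ := hΓ.exists_finset q (κ / 2)
  have hAB := card_displacement_le hκ.le hQ hA hB
  have hgq : dist q (g.1 q) ≤ a := hg q (by rw [dist_self]; positivity)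
  have hhq : dist q (h.1 q) ≤ b := hh q (by rw [dist_self]; positivity)
  have ha0 : 0 ≤ a := dist_nonneg.trans hgq
  have hb0 : 0 ≤ b := dist_nonneg.trans hhq
  set ψ : ↥Γ → ℝ := fun k => max 0 (1 - dist q (k.1 q) / κ) with hψ
  have hψ0 : ∀ k, κ ≤ dist q (k.1 q) → ψ k = 0 := fun k hk => by
    rw [hψ]
    refine max_eq_left ?_
    rw [sub_nonpos, le_div_iff₀ hκ]
    linarith
  have hψL : ∀ k k' : ↥Γ, |ψ k - ψ k'| ≤ |dist q (k.1 q) - dist q (k'.1 q)| / κ := fun k k' => by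
    refine (abs_max_sub_max_le_max _ _ _ _).trans ?_
    rw [sub_self, abs_zero, max_eq_right (abs_nonneg _)]
    apply le_of_eq
    rw [← abs_of_pos hκ, ← abs_div, abs_of_pos hκ, ← abs_neg]
    congr 1
    ring
  have hsupp : (Function.support ψ).Finite := by
    refine A.finite_toSet.subset fun y hy => ?_
    rw [Finset.mem_coe, hA]
    by_contra hcon
    exact hy (hψ0 y (by linarith))
  have main : ∀ (g h : ↥Γ) (a b : ℝ), 0 ≤ a → a ≤ κ → MovesLE g.1 q (2 * κ) a →
      MovesLE h.1 q (2 * κ) b → ∀ k, |convSquare ψ (g * (h * k)) - convSquare ψ (h * k) -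
      (convSquare ψ (g * k) - convSquare ψ k)| ≤ A.card * (a / κ * (b / κ)) := by
    intro g h a b ha0 ha hg hh k
    have hgq : dist q (g.1 q) ≤ a := hg q (by rw [dist_self]; positivity)
    have hgy : ∀ y : ↥Γ, |dist q ((g * y).1 q) - dist q (y.1 q)| ≤ a := fun y => by
      rw [Subgroup.coe_mul, IsometryEquiv.mul_apply, ← (g.1).dist_eq q (y.1 q)]
      exact (abs_dist_sub_le _ _ _).trans hgq
    refine abs_convSquare_second_difference_le hsupp (by positivity) ?_ ?_ ?_
    · intro y hy
      rw [hA, not_le] at hy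
      have := abs_le.1 (hgy y)
      exact ⟨hψ0 _ (by linarith), hψ0 _ (by linarith)⟩
    · intro y _
      refine (hψL _ _).trans ?_
      gcongr
      exact hgy y
    · intro y hy
      rw [hA] at hy
      refine (hψL _ _).trans ?_
      gcongr
      have e1 : ∀ k : ↥Γ, dist q ((y⁻¹ * k).1 q) = dist (y.1 q) (k.1 q) := fun k => by
        rw [← (y.1).dist_eq]
        simp
      rw [e1, e1, Subgroup.coe_mul, IsometryEquiv.mul_apply, ← (h.1).dist_eq (y.1 q) (k.1 q)]
      exact (abs_dist_sub_le _ _ _).trans (hh _ (by rw [dist_comm]; exact hy))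
  have hw : ∀ k, convSquare ψ k - convSquare ψ ((g * h * g⁻¹ * h⁻¹) * k) ≤
      2 * (A.card * (a / κ * (b / κ))) := by
    intro k
    have h1 := abs_le.1 (main g h a b ha0 ha hg hh ((h * g)⁻¹ * k))
    have h2 := abs_le.1 (main h g b a hb0 hb hh hg ((h * g)⁻¹ * k))
    have e1 : g * (h * ((h * g)⁻¹ * k)) = (g * h * g⁻¹ * h⁻¹) * k := by group
    have e2 : h * (g * ((h * g)⁻¹ * k)) = k := by group
    rw [e1] at h1
    rw [e2, mul_comm (b / κ)] at h2
    linarith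
  have hwn : ∀ n : ℕ, convSquare ψ 1 - convSquare ψ ((g * h * g⁻¹ * h⁻¹) ^ n) ≤
      n * (2 * (A.card * (a / κ * (b / κ)))) := by
    intro n
    induction n with
    | zero => simp
    | succ n ih =>
      have := hw ((g * h * g⁻¹ * h⁻¹) ^ n)
      rw [← pow_succ'] at this
      push_cast
      linarith
  have hzero : convSquare ψ ((g * h * g⁻¹ * h⁻¹) ^ n) = 0 := by
    generalize (g * h * g⁻¹ * h⁻¹) ^ n = w at hn
    unfold convSquare
    rw [← finsum_zero (α := ↥Γ)]
    refine finsum_congr fun y => ?_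
    by_cases hy : κ ≤ dist q (y.1 q)
    · rw [hψ0 y hy, zero_mul]
    · rw [hψ0 (y⁻¹ * w), mul_zero]
      have e1 : dist q ((y⁻¹ * w).1 q) = dist (y.1 q) (w.1 q) := by
        rw [← (y.1).dist_eq]
        simp
      rw [e1]
      linarith [dist_triangle q (y.1 q) (w.1 q)]
  have hone : (B.card : ℝ) * (1 / 4) ≤ convSquare ψ 1 := by
    have hinv : ∀ y : ↥Γ, ψ (y⁻¹ * 1) = ψ y := fun y => by
      simp only [hψ, mul_one, Subgroup.coe_inv, dist_self_inv]
    unfold convSquare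
    rw [finsum_eq_sum_of_support_subset (s := A)]
    · have hsub : B ⊆ A := fun y hy => by
        rw [hB] at hy
        rw [hA]
        linarith
      refine le_trans ?_ (Finset.sum_le_sum_of_subset_of_nonneg hsub fun y _ _ => ?_)
      · rw [← nsmul_eq_mul]
        refine Finset.card_nsmul_le_sum _ _ _ fun y hy => ?_
        rw [hB] at hy
        rw [hinv]
        have : 1 / 2 ≤ ψ y := by
          refine le_trans ?_ (le_max_right _ _)
          have : dist q (y.1 q) / κ ≤ 1 / 2 := by rw [div_le_iff₀ hκ]; linarith
          linarith
        nlinarith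
      · rw [hinv]
        exact mul_self_nonneg _
    · intro y hy
      rw [Finset.mem_coe, hA]
      by_contra hcon
      exact (left_ne_zero_of_mul hy) (hψ0 y (by linarith))
  have hB1 : (1 : ℝ) ≤ B.card := by
    have : 1 ∈ B := by
      rw [hB]
      simp only [Subgroup.coe_one, IsometryEquiv.coe_one, id, dist_self]
      positivity
    exact_mod_cast Finset.card_pos.2 ⟨1, this⟩
  have hfin := hwn n
  rw [hzero, sub_zero] at hfin
  have hABr : (A.card : ℝ) ≤ Q * B.card := by exact_mod_cast hAB
  have h3 : (B.card : ℝ) * (1 / 4) ≤ n * (2 * (Q * B.card * (a / κ * (b / κ)))) :=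
    (hone.trans hfin).trans (by gcongr)
  have h4 : (B.card : ℝ) * κ ^ 2 ≤ B.card * (8 * Q * n * (a * b)) := by
    have e : (n : ℝ) * (2 * (Q * B.card * (a / κ * (b / κ)))) =
        (n * (2 * (Q * B.card * (a * b)))) / κ ^ 2 := by field_simp
    rw [e, le_div_iff₀ (by positivity)] at h3
    linarith
  exact le_of_mul_le_mul_left h4 (by linarith)

end

section GroupTheory

variable {G : Type*} [Group G]

theorem IsVirtuallyNilpotent.of_injective {G' : Type*} [Group G'] (h : IsVirtuallyNilpotent G')
    (f : G →* G') (hf : Function.Injective f) : IsVirtuallyNilpotent G := by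
  obtain ⟨K, hK, hKn⟩ := h
  refine ⟨K.comap f, ⟨?_⟩, ?_⟩
  · rw [Subgroup.index_comap]
    exact fun h0 => hK.index_ne_zero (Subgroup.index_eq_zero_of_relIndex_eq_zero h0)
  · let F : ↥(K.comap f) →* ↥K := f.subgroupComap K
    have hF : F.ker ≤ Subgroup.center _ := by
      intro x hx
      have : F x = 1 := hx
      have h1 : f x.1 = f 1 := by
        rw [map_one]
        exact congrArg Subtype.val this
      have h2 : x = 1 := Subtype.ext (hf h1)
      rw [h2]
      exact Subgroup.one_mem _
    exact Subgroup.isNilpotent_of_ker_le_center F hF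

theorem IsVirtuallyNilpotent.of_finiteIndex {H : Subgroup G} [hH : H.FiniteIndex]
    (h : IsVirtuallyNilpotent ↥H) : IsVirtuallyNilpotent G := by
  obtain ⟨K, hK, hKn⟩ := h
  refine ⟨K.map H.subtype, ⟨?_⟩, ?_⟩
  · rw [Subgroup.index_map_subtype]
    exact mul_ne_zero hK.index_ne_zero hH.index_ne_zero
  · exact Group.nilpotent_of_mulEquiv (K.equivMapOfInjective H.subtype H.subtype_injective)

/-- If iterated commutators with a generating set end up in a finite normal subgroup, the
group is virtually nilpotent. -/
theorem isVirtuallyNilpotent_of_commutators {T : Set G} (hT : Subgroup.closure T = ⊤)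
    {F : Subgroup G} [Finite ↥F] (hF : F.Normal)
    {W : ℕ → Set G} (hTW : T ⊆ W 0) (hW : Antitone W)
    (hcomm : ∀ t ∈ T, ∀ k, ∀ w ∈ W k, t * w * t⁻¹ * w⁻¹ ∈ W (k + 1)) {K : ℕ} (hK : W K ⊆ F) :
    IsVirtuallyNilpotent G := by
  let N : ℕ → Subgroup G := fun k => Subgroup.closure (W k ∪ F)
  have hFN : ∀ k, F ≤ N k := fun k x hx => Subgroup.subset_closure (Or.inr hx)
  have hWN : ∀ k, W k ⊆ N k := fun k x hx => Subgroup.subset_closure (Or.inl hx)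
  have hNK : N K = F := by
    refine le_antisymm ((Subgroup.closure_le _).2 ?_) (hFN K)
    rintro x (hx | hx)
    · exact hK hx
    · exact hx
  have hN0 : N 0 = ⊤ := by
    rw [eq_top_iff, ← hT, Subgroup.closure_le]
    exact hTW.trans (hWN 0)
  have hanti : ∀ k, N (k + 1) ≤ N k := fun k =>
    Subgroup.closure_mono (Set.union_subset_union_left _ (hW (Nat.le_succ k)))
  have step1 : ∀ k, (N (k + 1)).Normal → ∀ n ∈ N k, ∀ g, n * g * n⁻¹ * g⁻¹ ∈ N (k + 1) := by
    intro k hk n hn g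
    have hc : N k ≤ (Subgroup.center (G ⧸ N (k + 1))).comap (QuotientGroup.mk' (N (k + 1))) := by
      refine (Subgroup.closure_le _).2 fun w hw => ?_
      have h2 : (⊤ : Subgroup G) ≤ (Subgroup.centralizer
          {QuotientGroup.mk' (N (k + 1)) w}).comap (QuotientGroup.mk' (N (k + 1))) := by
        rw [← hT, Subgroup.closure_le]
        intro t ht
        rw [SetLike.mem_coe, Subgroup.mem_comap, Subgroup.mem_centralizer_singleton_iff]
        have h3 : t * w * t⁻¹ * w⁻¹ ∈ N (k + 1) := by
          rcases hw with hw | hw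
          · exact hWN _ (hcomm t ht k w hw)
          · exact hFN _ (F.mul_mem (hF.conj_mem w hw t) (F.inv_mem hw))
        have h4 : QuotientGroup.mk' (N (k + 1)) (t * w * t⁻¹ * w⁻¹) = 1 :=
          (QuotientGroup.eq_one_iff _).2 h3
        rw [map_mul, map_mul, map_mul, map_inv, map_inv, mul_inv_eq_one, mul_inv_eq_iff_eq_mul] at h4
        exact h4
      rw [SetLike.mem_coe, Subgroup.mem_comap, Subgroup.mem_center_iff]
      intro q
      obtain ⟨y, rfl⟩ := QuotientGroup.mk'_surjective _ q
      have := h2 (Subgroup.mem_top y)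
      rw [Subgroup.mem_comap, Subgroup.mem_centralizer_singleton_iff] at this
      exact this
    have h5 := hc hn
    rw [Subgroup.mem_comap, Subgroup.mem_center_iff] at h5
    have h6 := h5 (QuotientGroup.mk' _ g)
    refine (QuotientGroup.eq_one_iff _).1 ?_
    change QuotientGroup.mk' (N (k + 1)) (n * g * n⁻¹ * g⁻¹) = 1
    rw [map_mul, map_mul, map_mul, map_inv, map_inv, ← h6]
    group
  have hnorm : ∀ i k, i + k = K → (N k).Normal := by
    intro i
    induction i with
    | zero =>
      intro k hk
      rw [zero_add] at hk
      rw [hk, hNK]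
      exact hF
    | succ i ih =>
      intro k hk
      refine ⟨fun n hn g => ?_⟩
      have h1 := step1 k (ih (k + 1) (by omega)) n hn g
      have h2 := (N k).mul_mem ((N k).inv_mem (hanti k h1)) hn
      have e : (n * g * n⁻¹ * g⁻¹)⁻¹ * n = g * n * g⁻¹ := by group
      rwa [e] at h2
  let Z : Subgroup G := (MulAut.conjNormal (H := F)).ker
  have hZ : ∀ z ∈ Z, ∀ f ∈ F, z * f * z⁻¹ = f := by
    intro z hz f hf
    have h1 : MulAut.conjNormal (H := F) z = 1 := hz
    have h2 := MulAut.conjNormal_apply (H := F) z ⟨f, hf⟩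
    rw [h1] at h2
    exact h2.symm
  have hfin : Finite (MulAut ↥F) := by
    refine Finite.of_injective (fun e : MulAut ↥F => (e : ↥F → ↥F)) fun e e' h => ?_
    exact MulEquiv.ext fun x => congrFun h x
  refine ⟨Z, Subgroup.finiteIndex_ker _, ?_⟩
  rw [Subgroup.nilpotent_iff_finite_descending_central_series]
  refine ⟨K + 1, fun k => if k ≤ K then (N k).subgroupOf Z else ⊥, ⟨?_, ?_⟩, ?_⟩
  · simp [hN0]
  · intro x k hx g
    dsimp only at hx ⊢
    rcases lt_trichotomy k K with hk | hk | hk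
    · rw [if_pos hk.le] at hx
      rw [if_pos (by omega : k + 1 ≤ K), Subgroup.mem_subgroupOf]
      rw [Subgroup.mem_subgroupOf] at hx
      exact step1 k (hnorm (K - (k + 1)) (k + 1) (by omega)) _ hx _
    · rw [if_pos hk.le, hk, hNK, Subgroup.mem_subgroupOf] at hx
      rw [if_neg (by omega), Subgroup.mem_bot, commutatorElement_eq_one_iff_mul_comm]
      have := hZ g g.2 x hx
      rw [mul_inv_eq_iff_eq_mul] at this
      exact Subtype.ext this.symm
    · rw [if_neg (by omega), Subgroup.mem_bot] at hx
      rw [hx, commutatorElement_one_left]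
      exact Subgroup.one_mem _
  · simp

/-- The elements which are products of at most `n` elements of `S`. -/
def wordBall (S : Set G) (n : ℕ) : Set G :=
  {g | ∃ L : List G, L.length ≤ n ∧ (∀ u ∈ L, u ∈ S) ∧ g = L.prod}

theorem one_mem_wordBall (S : Set G) (n : ℕ) : 1 ∈ wordBall S n := ⟨[], by simp⟩

theorem mem_wordBall_one {S : Set G} {s : G} (hs : s ∈ S) : s ∈ wordBall S 1 :=
  ⟨[s], by simp, by simpa using hs, by simp⟩

theorem wordBall_mono (S : Set G) : Monotone (wordBall S) := fun _ _ hmn _ ⟨L, h1, h2, h3⟩ =>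
  ⟨L, h1.trans hmn, h2, h3⟩

theorem mul_mem_wordBall {S : Set G} {m n : ℕ} {g h : G} (hg : g ∈ wordBall S m)
    (hh : h ∈ wordBall S n) : g * h ∈ wordBall S (m + n) := by
  obtain ⟨L, h1, h2, rfl⟩ := hg
  obtain ⟨L', h1', h2', rfl⟩ := hh
  refine ⟨L ++ L', by rw [List.length_append]; omega, fun u hu => ?_, by rw [List.prod_append]⟩
  rcases List.mem_append.1 hu with hu | hu
  · exact h2 u hu
  · exact h2' u hu

theorem inv_mem_wordBall {S : Set G} (hS : ∀ s ∈ S, s⁻¹ ∈ S) {n : ℕ} {g : G}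
    (hg : g ∈ wordBall S n) : g⁻¹ ∈ wordBall S n := by
  obtain ⟨L, h1, h2, rfl⟩ := hg
  refine ⟨(L.map (·⁻¹)).reverse, by simpa using h1, fun u hu => ?_, by rw [List.prod_inv_reverse]⟩
  rw [List.mem_reverse, List.mem_map] at hu
  obtain ⟨v, hv, rfl⟩ := hu
  exact hS v (h2 v hv)

theorem pow_mem_wordBall {S : Set G} {m : ℕ} {g : G} (hg : g ∈ wordBall S m) (n : ℕ) :
    g ^ n ∈ wordBall S (n * m) := by
  induction n with
  | zero => simpa using one_mem_wordBall S 0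
  | succ n ih =>
    rw [pow_succ, Nat.succ_mul]
    exact mul_mem_wordBall ih hg

theorem exists_mem_wordBall {S : Set G} (hS : ∀ s ∈ S, s⁻¹ ∈ S) (hcl : Subgroup.closure S = ⊤)
    (g : G) : ∃ n, g ∈ wordBall S n := by
  have : g ∈ (Subgroup.closure S).toSubmonoid := by rw [hcl]; trivial
  rw [Subgroup.closure_toSubmonoid] at this
  obtain ⟨L, hL, rfl⟩ := Submonoid.exists_list_of_mem_closure this
  refine ⟨L.length, L, le_rfl, fun u hu => ?_, rfl⟩
  rcases hL u hu with h | h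
  · exact h
  · simpa using hS _ h

/-- A property of `1` that is stable under left multiplication by a symmetric generating set
holds on the whole group. -/
theorem symmetric_generation_induction {S : Set G} (hS : ∀ s ∈ S, s⁻¹ ∈ S)
    (hcl : Subgroup.closure S = ⊤) {p : G → Prop} (h1 : p 1)
    (hmul : ∀ s ∈ S, ∀ g, p g → p (s * g)) (g : G) : p g := by
  obtain ⟨n, L, -, hL, rfl⟩ := exists_mem_wordBall hS hcl g
  induction L with
  | nil => exact h1
  | cons a L ih =>
    rw [List.prod_cons]
    exact hmul a (hL a (by simp)) _ (ih fun u hu => hL u (by simp [hu]))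

theorem finiteIndex_of_wordBall {S : Set G} (hS : ∀ s ∈ S, s⁻¹ ∈ S)
    (hcl : Subgroup.closure S = ⊤) (H : Subgroup G) {α : Type*} (E : Finset α) (f : G → α)
    (hfE : ∀ g ∈ wordBall S E.card, f g ∈ E)
    (hf : ∀ g ∈ wordBall S E.card, ∀ h ∈ wordBall S E.card, f g = f h → g⁻¹ * h ∈ H) :
    H.FiniteIndex := by
  classical
  let C : ℕ → Set (G ⧸ H) := fun j => (fun g : G => (g : G ⧸ H)) '' wordBall S j
  have hCmono : Monotone C := fun i j hij => Set.image_mono (wordBall_mono S hij)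
  have hCfin : (C E.card).Finite ∧ (C E.card).ncard ≤ E.card := by
    have h1 : ∀ q : G ⧸ H, ∃ g : G, q ∈ C E.card → g ∈ wordBall S E.card ∧ (g : G ⧸ H) = q := by
      intro q
      by_cases hq : q ∈ C E.card
      · obtain ⟨g, hg, hgq⟩ := hq
        exact ⟨g, fun _ => ⟨hg, hgq⟩⟩
      · exact ⟨1, fun h => absurd h hq⟩
    choose e he using h1
    have hmaps : Set.MapsTo (fun q => f (e q)) (C E.card) (E : Set α) :=
      fun q hq => hfE _ (he q hq).1
    have hinj : Set.InjOn (fun q => f (e q)) (C E.card) := by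
      intro q hq q' hq' h
      rw [← (he q hq).2, ← (he q' hq').2]
      exact QuotientGroup.eq.2 (hf _ (he q hq).1 _ (he q' hq').1 h)
    refine ⟨Set.Finite.of_injOn hmaps hinj E.finite_toSet, ?_⟩
    have := Set.ncard_le_ncard_of_injOn _ hmaps hinj E.finite_toSet
    rwa [Set.ncard_coe_finset] at this
  obtain ⟨j, hj, hjC⟩ : ∃ j < E.card, C j = C (j + 1) := by
    by_contra! hcon
    have h2 : ∀ j ≤ E.card, j + 1 ≤ (C j).ncard := by
      intro j
      induction j with
      | zero =>
        intro _
        have hf0 := hCfin.1.subset (hCmono (Nat.zero_le E.card))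
        have : (C 0).Nonempty := ⟨_, 1, one_mem_wordBall S 0, rfl⟩
        exact (Set.ncard_pos hf0).2 this
      | succ j ih =>
        intro hj
        have h3 := ih (by omega)
        have hf1 := hCfin.1.subset (hCmono hj)
        have h4 := Set.ncard_lt_ncard
          (LE.le.ssubset_of_ne (hCmono (Nat.le_succ j)) (hcon j (by omega))) hf1
        have : (C j.succ).ncard = (C (j + 1)).ncard := rfl
        omega
    have := h2 _ le_rfl
    omega
  have hall : ∀ g : G, (g : G ⧸ H) ∈ C j := by
    refine symmetric_generation_induction hS hcl ⟨1, one_mem_wordBall S j, rfl⟩ ?_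
    rintro s hs g ⟨g', hg', he⟩
    rw [hjC]
    refine ⟨s * g', ?_, ?_⟩
    · rw [add_comm]
      exact mul_mem_wordBall (mem_wordBall_one hs) hg'
    · rw [QuotientGroup.eq] at he ⊢
      convert he using 1
      group
  have hfinq : Finite (G ⧸ H) := by
    rw [← Set.finite_univ_iff]
    refine (hCfin.1.subset (hCmono hj.le)).subset fun q _ => ?_
    obtain ⟨g, rfl⟩ := QuotientGroup.mk_surjective q
    exact hall g
  exact Subgroup.finiteIndex_of_finite_quotient

end GroupTheory

section Margulis

variable {X : Type*} [MetricSpace X] {σ : X → X → ℝ → X} {Γ : Subgroup (X ≃ᵢ X)}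

/-- Elements of `Γ` moving the ball of radius `r` very little still move the ball of radius
`r + 2 * l` a little. -/
def IsGoodRadius (Γ : Subgroup (X ≃ᵢ X)) (x : X) (r l : ℝ) : Prop :=
  ∀ u ∈ Γ, MovesLE u x r (l / 48) → MovesLE u x (r + 2 * l) (l / 8)

theorem MovesLE.mono {u : X ≃ᵢ X} {x : X} {r r' M M' : ℝ} (h : MovesLE u x r M) (hr : r' ≤ r)
    (hM : M ≤ M') : MovesLE u x r' M' := fun y hy => (h y (hy.trans hr)).trans hM

theorem exists_goodRadius (hσ : IsGCB σ) (hΓσ : ∀ g ∈ Γ, IsSigmaIsometry σ g) {N₁ N₂ : ℕ}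
    (h₁ : PackBound X 2 (1 / 256) N₁) (h₂ : PackBound X 3 (1 / 64) N₂) (x : X) {l : ℝ}
    (hl : l = 1 / (2 * (N₁ * N₂ + 1 : ℕ))) :
    ∃ i < N₁ * N₂ + 1, IsGoodRadius Γ x (2 * i * l) l := by
  classical
  set k := N₁ * N₂ + 1 with hk
  have hk1 : (1 : ℝ) ≤ k := by exact_mod_cast Nat.succ_le_succ (Nat.zero_le _)
  have hl0 : 0 < l := by rw [hl]; positivity
  have hkl : 2 * (k : ℝ) * l = 1 := by rw [hl]; field_simp
  have hlh : l ≤ 1 / 2 := by nlinarith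
  by_contra! hcon
  have hex : ∀ i : ℕ, ∃ v : X ≃ᵢ X, ∃ z : X, i < k → v ∈ Γ ∧ MovesLE v x (2 * i * l) (l / 48) ∧
      dist z x ≤ 2 ∧ ∀ v' ∈ Γ, MovesLE v' x (2 * i * l + 2 * l) (l / 48) →
        1 / 32 ≤ dist (v z) (v' z) := by
    intro i
    by_cases hi : i < k
    swap
    · exact ⟨1, x, fun h => absurd h hi⟩
    have hbad := hcon i hi
    unfold IsGoodRadius at hbad
    push Not at hbad
    obtain ⟨v, hv, hvm, hvb⟩ := hbad
    unfold MovesLE at hvb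
    push Not at hvb
    obtain ⟨y, hy, hyv⟩ := hvb
    have hir : 2 * (i : ℝ) * l + 2 * l ≤ 1 := by
      have : (i : ℝ) + 1 ≤ k := by exact_mod_cast hi
      nlinarith
    have hi0 : 0 ≤ 2 * (i : ℝ) * l := by positivity
    obtain ⟨y', hy'1, hy'2⟩ := hσ.exists_pull x y hi0 (by positivity : 0 ≤ 2 * l)
      (by rw [dist_comm]; exact hy)
    obtain ⟨z, hz1, -, hz3⟩ := hσ.extend_to y' y one_pos (by linarith)
    refine ⟨v, z, fun _ => ⟨hv, hvm, ?_, ?_⟩⟩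
    · linarith [dist_triangle z y' x, dist_comm z y', dist_comm x y']
    · intro v' hv' hv'm
      have hyle : dist y' x ≤ 2 * i * l := by rw [dist_comm]; exact hy'1
      have e1 : dist (v y') (v' y') ≤ l / 24 := by
        have a1 := hvm y' hyle
        have a2 := hv'm y' (by linarith)
        linarith [dist_triangle (v y') y' (v' y'), dist_comm (v y') y']
      have e2 : 5 * l / 48 ≤ dist (v y) (v' y) := by
        have a2 := hv'm y hy
        linarith [dist_triangle y (v' y) (v y), dist_comm (v y) (v' y)]
      have e3 := hσ.displacement_le (hΓσ v hv) (hΓσ v' hv') y' z (t := dist y' y / 1)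
        ⟨by positivity, by rw [div_one]; linarith⟩
      rw [hz3, div_one] at e3
      have h0 := dist_nonneg (x := v z) (y := v' z)
      have h0' := dist_nonneg (x := y') (y := y)
      have h0'' := dist_nonneg (x := v y') (y := v' y')
      by_contra! hlt
      nlinarith
  choose v z hvz using hex
  obtain ⟨Z, hZ, -, hZ2⟩ := h₁.exists_net (by norm_num) x
  have hf : ∀ i, ∃ w, i < k → w ∈ Z ∧ dist (z i) w ≤ 1 / 256 := by
    intro i
    by_cases hi : i < k
    · obtain ⟨w, hw, hw'⟩ := hZ2 (z i) (hvz i hi).2.2.1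
      exact ⟨w, fun _ => ⟨hw, hw'⟩⟩
    · exact ⟨x, fun h => absurd h hi⟩
  choose f hf using hf
  obtain ⟨w, hw, hcard⟩ := Finset.exists_lt_card_fiber_of_mul_lt_card_of_maps_to
    (s := Finset.range k) (t := Z) (f := f) (n := N₂)
    (fun i hi => (hf i (Finset.mem_range.1 hi)).1) (by
      rw [Finset.card_range]
      calc Z.card * N₂ ≤ N₁ * N₂ := by gcongr
        _ < k := by omega)
  have hmem : ∀ i, i ∈ (Finset.range k).filter (fun i => f i = w) →
      i < k ∧ dist (z i) w ≤ 1 / 256 := by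
    intro i hi
    rw [Finset.mem_filter, Finset.mem_range] at hi
    have := (hf i hi.1).2
    rw [hi.2] at this
    exact ⟨hi.1, this⟩
  have hsep : ∀ i j, i ∈ (Finset.range k).filter (fun i => f i = w) →
      j ∈ (Finset.range k).filter (fun i => f i = w) → i < j → 1 / 64 < dist (v i w) (v j w) := by
    intro i j hi hj hij
    obtain ⟨hik, hiw⟩ := hmem i hi
    obtain ⟨hjk, -⟩ := hmem j hj
    have hij' : (i : ℝ) + 1 ≤ j := by exact_mod_cast hij
    have h1 := (hvz i hik).2.2.2 (v j) (hvz j hjk).1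
      ((hvz j hjk).2.1.mono (by nlinarith) le_rfl)
    have h2 := (v i).dist_eq (z i) w
    have h3 := (v j).dist_eq (z i) w
    have := dist_triangle4 (v i (z i)) (v i w) (v j w) (v j (z i))
    rw [dist_comm (v j w), h2, h3] at this
    linarith
  have hsep' : ∀ i j, i ∈ (Finset.range k).filter (fun i => f i = w) →
      j ∈ (Finset.range k).filter (fun i => f i = w) → i ≠ j → 1 / 64 < dist (v i w) (v j w) := by
    intro i j hi hj hij
    rcases lt_or_gt_of_ne hij with h | h
    · exact hsep i j hi hj h
    · rw [dist_comm]
      exact hsep j i hj hi h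
  have hinj : Set.InjOn (fun i => v i w) ((Finset.range k).filter (fun i => f i = w) : Finset ℕ) := by
    intro i hi j hj h
    by_contra hne
    have := hsep' i j hi hj hne
    dsimp only at h
    rw [h, dist_self] at this
    norm_num at this
  have hwx : dist w x ≤ 2 + 1 / 256 := by
    obtain ⟨i, hi⟩ := Finset.card_pos.1 (lt_of_le_of_lt (Nat.zero_le _) hcard)
    obtain ⟨hik, hiw⟩ := hmem i hi
    linarith [dist_triangle w (z i) x, (hvz i hik).2.2.1, dist_comm w (z i)]
  have hle := h₂ x (((Finset.range k).filter (fun i => f i = w)).image (fun i => v i w)) (by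
    intro a ha
    obtain ⟨i, hi, rfl⟩ := Finset.mem_image.1 ha
    obtain ⟨hik, -⟩ := hmem i hi
    have h1 := (hvz i hik).2.1 x (by rw [dist_self]; positivity)
    have h2 := (v i).dist_eq w x
    linarith [dist_triangle (v i w) (v i x) x, dist_comm x (v i x)]) (by
    intro a ha b hb hab
    obtain ⟨i, hi, rfl⟩ := Finset.mem_image.1 ha
    obtain ⟨j, hj, rfl⟩ := Finset.mem_image.1 hb
    exact hsep' i j hi hj fun h => hab (by rw [h]))
  rw [Finset.card_image_of_injOn hinj] at hle
  omega

theorem MovesLE.nonneg {u : X ≃ᵢ X} {x : X} {r M : ℝ} (hr : 0 ≤ r) (h : MovesLE u x r M) : 0 ≤ M :=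
  dist_nonneg.trans (h x (by rwa [dist_self]))

/-- Either all the iterated squares of `u` move a ball little, or there is a first one that
does not, and then `u` is uniformly close to the identity. -/
theorem IsGCB.escape_dichotomy (hσ : IsGCB σ) {u : X ≃ᵢ X} (hu : IsSigmaIsometry σ u) {x : X}
    {r l : ℝ} (hl : 0 < l) (h : MovesLE u x (r + l) (l / 8)) :
    (∀ p, dist p x ≤ r → u p = p) ∨ ∃ J : ℕ, ¬ MovesLE (u ^ 2 ^ J) x (r + l) (l / 8) ∧
      ∀ p, dist p x ≤ r → dist p (u p) ≤ l / 2 / 2 ^ J := by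
  classical
  by_cases hall : ∀ j, MovesLE (u ^ 2 ^ j) x (r + l) (l / 8)
  · exact Or.inl fun p hp => hσ.fixes_of_escape hu hl hall hp
  · push Not at hall
    refine Or.inr ⟨Nat.find hall, Nat.find_spec hall, fun p hp => ?_⟩
    set J := Nat.find hall with hJ
    have hlt : ∀ j < J, MovesLE (u ^ 2 ^ j) x (r + l) (l / 8) := fun j hj => by
      by_contra hc
      exact Nat.find_min hall hj hc
    have hJ0 : J ≠ 0 := fun h0 => by
      have := Nat.find_spec hall
      rw [← hJ, h0] at this
      exact this (by simpa using h)
    obtain ⟨i, hi⟩ := Nat.exists_eq_succ_of_ne_zero hJ0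
    refine (hσ.escape hu hl hlt hp).trans ?_
    have h1 : dist p ((u ^ 2 ^ J) p) ≤ l / 4 := by
      rw [hi, Nat.succ_eq_add_one, pow_two_pow_succ]
      have h2 := dist_self_mul_le (u ^ 2 ^ i) (u ^ 2 ^ i) p
      have h3 := hlt i (by omega) p (by linarith)
      linarith
    calc 2 / 2 ^ J * dist p ((u ^ 2 ^ J) p) ≤ 2 / 2 ^ J * (l / 4) := by gcongr
      _ = l / 2 / 2 ^ J := by ring

theorem IsGoodRadius.fixes (hσ : IsGCB σ) (hΓσ : ∀ g ∈ Γ, IsSigmaIsometry σ g) {x : X} {r l : ℝ}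
    (hl : 0 < l) (hgood : IsGoodRadius Γ x r l) {f : X ≃ᵢ X} (hf : f ∈ Γ)
    (hfix : ∀ p, dist p x ≤ r → f p = p) {p : X} (hp : dist p x ≤ r + l) : f p = p := by
  refine hσ.fixes_of_escape (hΓσ f hf) hl (x := x) (r := r + l) (fun j => ?_) hp
  have := hgood (f ^ 2 ^ j) (Γ.pow_mem hf _) (fun y hy => by
    have h1 := dist_self_pow_le f (2 ^ j) y
    rw [hfix y hy, dist_self, mul_zero] at h1
    linarith)
  exact this.mono (by linarith) le_rfl

theorem IsGoodRadius.enlarge (hσ : IsGCB σ) (hΓσ : ∀ g ∈ Γ, IsSigmaIsometry σ g) {x : X}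
    {r l ε : ℝ} (hl : 0 < l) (hr : 0 ≤ r) (hgood : IsGoodRadius Γ x r l) {u : X ≃ᵢ X} (hu : u ∈ Γ)
    (h1 : MovesLE u x (r + 2 * l) (l / 8)) (h2 : MovesLE u x r ε) :
    MovesLE u x (r + l) (24 * ε) := by
  have hε := h2.nonneg hr
  have e : r + 2 * l = r + l + l := by ring
  rcases hσ.escape_dichotomy (hΓσ u hu) hl (by rwa [← e]) with h | ⟨J, hJ, h⟩
  · intro p hp
    rw [h p hp, dist_self]
    positivity
  · intro p hp
    refine (h p hp).trans ?_
    by_contra! hcon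
    refine hJ ?_
    rw [← e]
    refine hgood _ (Γ.pow_mem hu _) fun y hy => ?_
    refine (dist_self_pow_le u (2 ^ J) y).trans ?_
    have h3 := h2 y hy
    rw [lt_div_iff₀ (by positivity)] at hcon
    push_cast
    have : (2 : ℝ) ^ J * dist y (u y) ≤ 2 ^ J * ε := by gcongr
    linarith

theorem commutator_movesLE (hσ : IsGCB σ) (hΓσ : ∀ g ∈ Γ, IsSigmaIsometry σ g)
    (hΓ : IsDiscreteSubgroup Γ) {x : X} {r l a b : ℝ} {Q : ℕ} (hl : 0 < l) (hr : 0 ≤ r)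
    (hQ : PackBound X (2 * (l / 32)) (l / 32 / 2) Q) {g h : X ≃ᵢ X} (hg : g ∈ Γ) (hh : h ∈ Γ)
    (hga : MovesLE g x (r + l) a) (hhb : MovesLE h x (r + l) b) (hab : 2 * a + 2 * b ≤ l / 16) :
    MovesLE (g * h * g⁻¹ * h⁻¹) x r (2048 * Q * (a * b) / l) := by
  have ha := hga.nonneg (by linarith)
  have hb := hhb.nonneg (by linarith)
  set w := g * h * g⁻¹ * h⁻¹ with hw
  have hwΓ : w ∈ Γ := Γ.mul_mem (Γ.mul_mem (Γ.mul_mem hg hh) (Γ.inv_mem hg)) (Γ.inv_mem hh)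
  have hwm : MovesLE w x (r + l / 2) (l / 2 / 8) := by
    intro p hp
    have h1 := dist_self_mul_le (g * h * g⁻¹) h⁻¹ p
    have h2 := dist_self_mul_le (g * h) g⁻¹ p
    have h3 := dist_self_mul_le g h p
    rw [dist_self_inv] at h1 h2
    have h4 := hga p (by linarith)
    have h5 := hhb p (by linarith)
    linarith
  rcases hσ.escape_dichotomy (hΓσ w hwΓ) (half_pos hl) hwm with h | ⟨J, hJ, hJ2⟩
  · intro p hp
    rw [h p hp, dist_self]
    positivity
  · intro p hp
    refine (hJ2 p hp).trans ?_
    unfold MovesLE at hJ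
    push Not at hJ
    obtain ⟨q, hq, hqw⟩ := hJ
    have hsub : ∀ y, dist y q ≤ 2 * (l / 32) → dist y x ≤ r + l := fun y hy => by
      linarith [dist_triangle y q x]
    have := commutator_displacement hΓ (κ := l / 32) (by positivity) hQ (g := ⟨g, hg⟩)
      (h := ⟨h, hh⟩) (a := a) (b := b) (n := 2 ^ J) (fun y hy => hga y (hsub y hy))
      (fun y hy => hhb y (hsub y hy)) (by linarith) (by linarith) (by
        refine le_trans ?_ hqw.le
        linarith)
    push_cast at this
    rw [le_div_iff₀ hl, div_mul_eq_mul_div, div_le_iff₀ (by positivity)]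
    nlinarith

end Margulis

section

variable {X : Type*} [MetricSpace X] {σ : X → X → ℝ → X} {Γ : Subgroup (X ≃ᵢ X)}

/-- The pointwise stabilizer of a ball. -/
def ballFixator (Γ : Subgroup (X ≃ᵢ X)) (x : X) (r : ℝ) : Subgroup (X ≃ᵢ X) where
  carrier := {f | f ∈ Γ ∧ ∀ p, dist p x ≤ r → f p = p}
  mul_mem' := fun {a b} ha hb => ⟨Γ.mul_mem ha.1 hb.1, fun p hp => by
    rw [IsometryEquiv.mul_apply, hb.2 p hp, ha.2 p hp]⟩
  one_mem' := ⟨Γ.one_mem, fun _ _ => rfl⟩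
  inv_mem' := fun {a} ha => ⟨Γ.inv_mem ha.1, fun p hp => by
    conv_lhs => rw [← ha.2 p hp]
    exact IsometryEquiv.inv_apply_self a p⟩

theorem IsDiscreteSubgroup.finite_ballFixator (hΓ : IsDiscreteSubgroup Γ) {x : X} {r : ℝ}
    (hr : 0 ≤ r) : Finite ↥(ballFixator Γ x r) := by
  refine Set.Finite.to_subtype ((hΓ x 0).subset fun f hf => ⟨hf.1, ?_⟩)
  rw [hf.2 x (by rwa [dist_self]), dist_self]

theorem isVirtuallyNilpotent_closure_of_movesLE (hσ : IsGCB σ)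
    (hΓσ : ∀ g ∈ Γ, IsSigmaIsometry σ g) (hΓ : IsDiscreteSubgroup Γ) {x : X} {r l c : ℝ} {Q : ℕ}
    (hl : 0 < l) (hr : 0 ≤ r) (hrl : r + 2 * l ≤ 1) (hgood : IsGoodRadius Γ x r l)
    (hQ : PackBound X (2 * (l / 32)) (l / 32 / 2) Q) (hc : c * (100000 * (Q + 1)) = l)
    {T : Set (X ≃ᵢ X)} (hTΓ : T ⊆ Γ) (hTinv : ∀ t ∈ T, t⁻¹ ∈ T) (hT : ∀ t ∈ T, MovesLE t x 2 c) :
    IsVirtuallyNilpotent ↥(Subgroup.closure T) := by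
  have hQ0 : (0 : ℝ) ≤ Q := Nat.cast_nonneg Q
  have hc0 : 0 < c := by
    by_contra! hcon
    nlinarith
  have hcl : 100000 * c ≤ l := by nlinarith
  have hcQ : 100000 * (Q * c) ≤ l := by nlinarith
  set W : ℕ → Set (X ≃ᵢ X) := fun k =>
    {w | w ∈ Γ ∧ MovesLE w x (r + 2 * l) (l / 8) ∧ MovesLE w x r ((1 / 2) ^ k * c)} with hW
  have hTsmall : ∀ t ∈ T, ∀ ρ ≤ 2, MovesLE t x ρ c := fun t ht ρ hρ => (hT t ht).mono hρ le_rfl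
  have hW0 : T ⊆ W 0 := fun t ht => ⟨hTΓ ht, (hT t ht).mono (by linarith) (by linarith),
    (hT t ht).mono (by linarith) (by simp)⟩
  have hWanti : Antitone W := antitone_nat_of_succ_le fun k w hw => ⟨hw.1, hw.2.1,
    hw.2.2.mono le_rfl (by
      rw [pow_succ]
      have : 0 < (1 / 2 : ℝ) ^ k * c := by positivity
      linarith)⟩
  have hcomm : ∀ t ∈ T, ∀ k, ∀ w ∈ W k, t * w * t⁻¹ * w⁻¹ ∈ W (k + 1) := by
    intro t ht k w hw
    obtain ⟨hw1, hw2, hw3⟩ := hw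
    have hk1 : (1 / 2 : ℝ) ^ k ≤ 1 := pow_le_one₀ (by norm_num) (by norm_num)
    have hk0 : (0 : ℝ) < (1 / 2 : ℝ) ^ k := by positivity
    refine ⟨Γ.mul_mem (Γ.mul_mem (Γ.mul_mem (hTΓ ht) hw1) (Γ.inv_mem (hTΓ ht))) (Γ.inv_mem hw1),
      ?_, ?_⟩
    · intro p hp
      have e : t * w * t⁻¹ * w⁻¹ = t * (w * t⁻¹ * w⁻¹) := by group
      rw [e]
      refine (dist_self_mul_le _ _ _).trans ?_
      rw [dist_conj, dist_self_inv]
      have h1 := hT t ht p (by linarith)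
      have h2 := hw2 p hp
      rw [← dist_self_inv] at h2
      have h3 := hT t ht (w⁻¹ p) (by
        linarith [dist_triangle (w⁻¹ p) p x, dist_comm (w⁻¹ p) p])
      linarith
    · have h1 := hgood.enlarge hσ hΓσ hl hr hw1 hw2 hw3
      have h2 := commutator_movesLE hσ hΓσ hΓ hl hr hQ (hTΓ ht) hw1
        (hTsmall t ht (r + l) (by linarith)) h1 (by nlinarith)
      refine h2.mono le_rfl ?_
      rw [div_le_iff₀ hl, pow_succ]
      have h3 : 98304 * (Q * c) ≤ l := by nlinarith
      have h4 : 0 < (1 / 2 : ℝ) ^ k * c := by positivity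
      nlinarith
  set F := ballFixator Γ x r with hF
  have hFfin : Finite ↥F := hΓ.finite_ballFixator hr
  have hconj : ∀ t ∈ T, ∀ f ∈ F, t * f * t⁻¹ ∈ F := by
    intro t ht f hf
    refine ⟨Γ.mul_mem (Γ.mul_mem (hTΓ ht) hf.1) (Γ.inv_mem (hTΓ ht)), fun p hp => ?_⟩
    rw [IsometryEquiv.mul_apply, IsometryEquiv.mul_apply,
      hgood.fixes hσ hΓσ hl hf.1 hf.2 (p := t⁻¹ p), IsometryEquiv.apply_inv_self]
    have := hT t⁻¹⁻¹ (by simpa using ht) p (by linarith)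
    rw [inv_inv, ← dist_self_inv] at this
    linarith [dist_triangle (t⁻¹ p) p x, dist_comm (t⁻¹ p) p]
  obtain ⟨K, hK⟩ : ∃ K, W K ⊆ F := by
    have h1 : ∀ w : X ≃ᵢ X, ∃ k, w ∈ W k → w ∈ F := by
      intro w
      by_cases hw : w ∈ F
      · exact ⟨0, fun _ => hw⟩
      by_cases hwΓ : w ∈ Γ
      swap
      · exact ⟨0, fun h => absurd h.1 hwΓ⟩
      obtain ⟨p, hp, hpw⟩ : ∃ p, dist p x ≤ r ∧ w p ≠ p := by
        by_contra! hcon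
        exact hw ⟨hwΓ, hcon⟩
      have hpos : 0 < dist p (w p) := dist_pos.2 (Ne.symm hpw)
      obtain ⟨k, hk⟩ := exists_pow_lt_of_lt_one (show 0 < dist p (w p) / c by positivity)
        (show (1 / 2 : ℝ) < 1 by norm_num)
      rw [lt_div_iff₀ hc0] at hk
      exact ⟨k, fun h => absurd (h.2.2 p hp) (not_le.2 hk)⟩
    choose k hk using h1
    have hfin := hΓ x c
    refine ⟨hfin.toFinset.sup k, fun w hw => ?_⟩
    refine hk w (hWanti (Finset.le_sup (f := k) ?_) hw)
    rw [Set.Finite.mem_toFinset]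
    refine ⟨hw.1, (hWanti (Nat.zero_le _) hw).2.2 x (by rwa [dist_self]) |>.trans ?_⟩
    simp
  set G' := Subgroup.closure T with hG'
  have hT' : Subgroup.closure (Subtype.val ⁻¹' T : Set ↥G') = ⊤ :=
    Subgroup.closure_closure_coe_preimage
  have hnorm : (F.subgroupOf G').Normal := by
    refine ⟨fun f hf g => ?_⟩
    have : ∀ g : ↥G', ∀ f : ↥G', f ∈ F.subgroupOf G' → g * f * g⁻¹ ∈ F.subgroupOf G' := by
      intro g
      refine symmetric_generation_induction (S := (Subtype.val ⁻¹' T : Set ↥G'))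
        (fun s hs => hTinv s.1 hs) hT' (p := fun g => ∀ f : ↥G', f ∈ F.subgroupOf G' →
          g * f * g⁻¹ ∈ F.subgroupOf G') (fun f hf => by simpa using hf) ?_ g
      intro s hs g ih f hf
      have h1 := ih f hf
      rw [Subgroup.mem_subgroupOf] at h1 ⊢
      have h2 := hconj s.1 hs _ h1
      convert h2 using 1
      push_cast
      group
    exact this g f hf
  have : Finite ↥(F.subgroupOf G') := by
    refine Finite.of_injective (fun f : ↥(F.subgroupOf G') => (⟨f.1.1, f.2⟩ : ↥F)) ?_
    intro a b h
    have := congrArg Subtype.val h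
    exact Subtype.ext (Subtype.ext this)
  exact isVirtuallyNilpotent_of_commutators hT' hnorm
    (W := fun k => Subtype.val ⁻¹' (W k)) (fun t ht => hW0 ht)
    (fun i j hij t ht => hWanti hij ht) (fun t ht k w hw => hcomm t ht k w hw) (K := K)
    (fun w hw => hK hw)

end

/-- A Margulis lemma: elements of a discrete group moving a ball of radius `2` very little
generate a virtually nilpotent group. -/
theorem exists_margulis_constant (P r : ℝ) (hr : 0 < r) :
    ∃ c : ℝ, 0 < c ∧ ∀ (X : Type*) [MetricSpace X] (σ : X → X → ℝ → X), IsGCB σ →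
      IsPacked X P r → ∀ Γ : Subgroup (X ≃ᵢ X), (∀ g ∈ Γ, IsSigmaIsometry σ g) →
      IsDiscreteSubgroup Γ → ∀ (x : X) (T : Set (X ≃ᵢ X)), T ⊆ Γ → (∀ t ∈ T, t⁻¹ ∈ T) →
      (∀ t ∈ T, MovesLE t x 2 c) → IsVirtuallyNilpotent ↥(Subgroup.closure T) := by
  obtain ⟨pk, hpk⟩ := exists_packing_function P r hr
  obtain ⟨l, hl⟩ : ∃ l : ℝ, l = 1 / (2 * (pk 2 (1 / 256) * pk 3 (1 / 64) + 1 : ℕ)) := ⟨_, rfl⟩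
  have hl0 : 0 < l := by rw [hl]; positivity
  set Q := pk (2 * (l / 32)) (l / 32 / 2) with hQ
  refine ⟨l / (100000 * (Q + 1)), by positivity, ?_⟩
  intro X _ σ hσ hP Γ hΓσ hΓ x T hTΓ hTinv hT
  obtain ⟨i, hi, hgood⟩ := exists_goodRadius hσ hΓσ (hpk X σ hσ hP 2 (1 / 256) (by norm_num))
    (hpk X σ hσ hP 3 (1 / 64) (by norm_num)) x hl
  refine isVirtuallyNilpotent_closure_of_movesLE hσ hΓσ hΓ hl0 (by positivity) ?_ hgood
    (hpk X σ hσ hP _ _ (by positivity)) (div_mul_cancel₀ _ (by positivity)) hTΓ hTinv hT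
  have h1 : (i : ℝ) + 1 ≤ (pk 2 (1 / 256) * pk 3 (1 / 64) + 1 : ℕ) := by exact_mod_cast hi
  have h2 : 2 * ((pk 2 (1 / 256) * pk 3 (1 / 64) + 1 : ℕ) : ℝ) * l = 1 := by rw [hl]; field_simp
  nlinarith

/-- If sufficiently long words in the generators move a point a bounded amount, the group is
virtually nilpotent. -/
theorem exists_short_word_bound (P r : ℝ) (hr : 0 < r) (C : ℝ) :
    ∃ M : ℕ, ∀ (X : Type*) [MetricSpace X] (σ : X → X → ℝ → X), IsGCB σ →
      IsPacked X P r → ∀ Γ : Subgroup (X ≃ᵢ X), (∀ g ∈ Γ, IsSigmaIsometry σ g) →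
      IsDiscreteSubgroup Γ → ∀ (S : Set ↥Γ), (∀ s ∈ S, s⁻¹ ∈ S) → Subgroup.closure S = ⊤ →
      ∀ x : X, (∀ g ∈ wordBall S M, dist x (g.1 x) ≤ C) → IsVirtuallyNilpotent ↥Γ := by
  obtain ⟨pk, hpk⟩ := exists_packing_function P r hr
  obtain ⟨c, hc, hmarg⟩ := exists_margulis_constant P r hr
  refine ⟨(pk (2 + C) (c / 4) + 1) ^ pk 2 (c / 4), ?_⟩
  intro X _ σ hσ hP Γ hΓσ hΓ S hS hScl x hx
  classical
  obtain ⟨Z₁, hZ₁c, hZ₁x, hZ₁⟩ := (hpk X σ hσ hP 2 (c / 4) (by positivity)).exists_net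
    (by positivity) x
  obtain ⟨Z₂, hZ₂c, -, hZ₂⟩ := (hpk X σ hσ hP (2 + C) (c / 4) (by positivity)).exists_net
    (by positivity) x
  have hf : ∀ y : X, ∃ z, dist y x ≤ 2 + C → z ∈ Z₂ ∧ dist y z ≤ c / 4 := by
    intro y
    by_cases hy : dist y x ≤ 2 + C
    · obtain ⟨z, hz, hz'⟩ := hZ₂ y hy
      exact ⟨z, fun _ => ⟨hz, hz'⟩⟩
    · exact ⟨x, fun h => absurd h hy⟩
  choose f hf using hf
  set T : Set (X ≃ᵢ X) := {g | g ∈ Γ ∧ MovesLE g x 2 c} with hT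
  have hVN := hmarg X σ hσ hP Γ hΓσ hΓ x T (fun g hg => hg.1)
    (fun g hg => ⟨Γ.inv_mem hg.1, fun y hy => by rw [dist_self_inv]; exact hg.2 y hy⟩)
    (fun g hg => hg.2)
  let E : Finset (↥Z₁ → X) := Fintype.piFinset fun _ => Z₂
  have hE : E.card ≤ (pk (2 + C) (c / 4) + 1) ^ pk 2 (c / 4) := by
    rw [Fintype.card_piFinset, Finset.prod_const, Finset.card_univ, Fintype.card_coe]
    calc Z₂.card ^ Z₁.card ≤ (pk (2 + C) (c / 4) + 1) ^ Z₁.card :=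
          Nat.pow_le_pow_left (by omega) _
      _ ≤ _ := Nat.pow_le_pow_right (by omega) hZ₁c
  have hball : ∀ g ∈ wordBall S E.card, ∀ z ∈ Z₁, dist (g.1 z) x ≤ 2 + C := by
    intro g hg z hz
    have h1 := hx g (wordBall_mono S hE hg)
    have h2 := (g.1).dist_eq z x
    linarith [dist_triangle (g.1 z) (g.1 x) x, dist_comm x (g.1 x), hZ₁x z hz]
  have hfi : ((Subgroup.closure T).subgroupOf Γ).FiniteIndex := by
    refine finiteIndex_of_wordBall hS hScl _ E (fun g z => f (g.1 z.1)) ?_ ?_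
    · intro g hg
      rw [Fintype.mem_piFinset]
      exact fun z => (hf _ (hball g hg z.1 z.2)).1
    · intro g hg h hh hgh
      rw [Subgroup.mem_subgroupOf]
      refine Subgroup.subset_closure ⟨(g⁻¹ * h).2, fun y hy => ?_⟩
      obtain ⟨z, hz, hyz⟩ := hZ₁ y hy
      have h1 := (hf _ (hball g hg z hz)).2
      have h2 := (hf _ (hball h hh z hz)).2
      have h3 : f (g.1 z) = f (h.1 z) := congrFun hgh ⟨z, hz⟩
      rw [← h3] at h2
      rw [← (g.1).dist_eq]
      simp only [Subgroup.coe_mul, Subgroup.coe_inv, IsometryEquiv.mul_apply,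
        IsometryEquiv.apply_inv_self]
      have h4 := (g.1).dist_eq y z
      have h5 := (h.1).dist_eq z y
      rw [dist_comm z y] at h5
      have h6 := dist_triangle4 (g.1 y) (g.1 z) (h.1 z) (h.1 y)
      linarith [dist_triangle_right (g.1 z) (h.1 z) (f (g.1 z))]
  refine IsVirtuallyNilpotent.of_finiteIndex (H := (Subgroup.closure T).subgroupOf Γ) ?_
  refine hVN.of_injective (Γ.subtype.subgroupComap (Subgroup.closure T)) ?_
  intro a b h
  have h' := congrArg (fun z : ↥(Subgroup.closure T) => z.1) h
  exact Subtype.ext (Subtype.ext h')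

theorem IsDeltaHyperbolic.four {X : Type*} [MetricSpace X] {δ : ℝ} (h : IsDeltaHyperbolic X δ)
    (x y z w : X) :
    dist x y + dist z w ≤ dist x z + dist y w + 2 * δ ∨
      dist x y + dist z w ≤ dist x w + dist y z + 2 * δ := by
  have h1 := h x y z w
  rcases max_cases (dist x z + dist y w) (dist x w + dist y z) with h2 | h2
  · left; linarith [h2.1]
  · right; linarith [h2.1]

theorem IsDeltaHyperbolic.growth_step {X : Type*} [MetricSpace X] {δ A : ℝ}
    (h : IsDeltaHyperbolic X δ) (hδ : 0 < δ) (hA : 3 * δ ≤ A) {z y₀ y₁ y₂ : X}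
    (h1 : dist z y₀ + (A - 2 * δ) ≤ dist z y₁)
    (h2 : dist y₀ y₁ + A ≤ dist y₀ y₂) (h3 : dist y₁ y₂ + A ≤ dist y₀ y₂) :
    dist z y₁ + (A - 2 * δ) ≤ dist z y₂ := by
  rcases h.four z y₁ y₀ y₂ with h4 | h4
  · linarith
  · rw [dist_comm y₁ y₀] at h4; linarith

theorem IsDeltaHyperbolic.local_step {X : Type*} [MetricSpace X] {δ κ₁ κ₂ : ℝ}
    (h : IsDeltaHyperbolic X δ) {z y₀ y₁ y₂ : X}
    (h1 : dist z y₀ + dist y₀ y₁ ≤ dist z y₁ + 2 * κ₁)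
    (h2 : dist y₀ y₁ + dist y₁ y₂ ≤ dist y₀ y₂ + 2 * κ₂)
    (h3 : κ₁ + κ₂ + δ < dist y₀ y₁) :
    dist z y₁ + dist y₁ y₂ ≤ dist z y₂ + 2 * (κ₂ + δ) := by
  rcases h.four z y₁ y₀ y₂ with h4 | h4
  · linarith
  · rw [dist_comm y₁ y₀] at h4; linarith

theorem IsDeltaHyperbolic.local_join {X : Type*} [MetricSpace X] {δ κ₁ κ₂ : ℝ}
    (h : IsDeltaHyperbolic X δ) {z y₀ y₁ w : X}
    (h1 : dist z y₀ + dist y₀ y₁ ≤ dist z y₁ + 2 * κ₁)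
    (h2 : dist y₀ y₁ + dist y₁ w ≤ dist y₀ w + 2 * κ₂)
    (h3 : κ₁ + κ₂ + δ < dist y₀ y₁) :
    dist z y₀ + dist y₀ w ≤ dist z w + 2 * (κ₁ + δ) := by
  rcases h.four z y₁ y₀ w with h4 | h4
  · linarith
  · rw [dist_comm y₁ y₀] at h4; linarith

/-- A sequence of points which, up to the error `K`, is monotone along a geodesic. -/
def IsQuasiLine {X : Type*} [MetricSpace X] (q : ℤ → X) (K : ℝ) : Prop :=
  ∀ i j k, i ≤ j → j ≤ k → dist (q i) (q j) + dist (q j) (q k) ≤ dist (q i) (q k) + 2 * K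

theorem IsQuasiLine.rev {X : Type*} [MetricSpace X] {q : ℤ → X} {K : ℝ} (h : IsQuasiLine q K) :
    IsQuasiLine (fun i => q (-i)) K := by
  intro i j k hij hjk
  have := h (-k) (-j) (-i) (by lia) (by lia)
  simp only [dist_comm (q (-i)), dist_comm (q (-j)) (q (-k))]
  linarith

theorem IsDeltaHyperbolic.local_growth {X : Type*} [MetricSpace X] {δ κ : ℝ}
    (h : IsDeltaHyperbolic X δ) (hδ : 0 < δ) (hκ : 0 ≤ κ) {q : ℤ → X}
    (hloc : ∀ i, dist (q i) (q (i + 1)) + dist (q (i + 1)) (q (i + 2))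
      ≤ dist (q i) (q (i + 2)) + 2 * κ)
    (hstep : ∀ i, 2 * κ + 3 * δ < dist (q i) (q (i + 1))) (i : ℤ) (n : ℕ) :
    dist (q i) (q (i + n)) + dist (q (i + n)) (q (i + n + 1)) ≤
      dist (q i) (q (i + n + 1)) + 2 * (κ + δ) := by
  induction n with
  | zero => simp; linarith
  | succ n ih =>
    have e : i + ((n + 1 : ℕ) : ℤ) = i + n + 1 := by push_cast; ring
    have e2 : i + (n : ℤ) + 1 + 1 = i + n + 2 := by ring
    rw [e, e2]
    have h1 := hloc (i + n)
    have h2 := hstep (i + n)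
    exact h.local_step ih h1 (by linarith)

theorem IsDeltaHyperbolic.isQuasiLine {X : Type*} [MetricSpace X] {δ κ : ℝ}
    (h : IsDeltaHyperbolic X δ) (hδ : 0 < δ) (hκ : 0 ≤ κ) {q : ℤ → X}
    (hloc : ∀ i, dist (q i) (q (i + 1)) + dist (q (i + 1)) (q (i + 2))
      ≤ dist (q i) (q (i + 2)) + 2 * κ)
    (hstep : ∀ i, 2 * κ + 3 * δ < dist (q i) (q (i + 1))) :
    IsQuasiLine q (κ + 2 * δ) := by
  have hrev := h.local_growth hδ hκ (q := fun i => q (-i))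
    (by
      intro i
      have h1 := hloc (-(i + 2))
      rw [show -(i + 2) + 1 = -(i + 1) by ring, show -(i + 2) + 2 = -i by ring,
        dist_comm (q (-(i + 2))), dist_comm _ (q (-i)), dist_comm _ (q (-i))] at h1
      linarith)
    (by
      intro i
      have h1 := hstep (-(i + 1))
      rw [show -(i + 1) + 1 = -i by ring, dist_comm] at h1
      exact h1)
  intro i j k hij hjk
  rcases hjk.eq_or_lt with rfl | hjk
  · simp; linarith
  obtain ⟨n, rfl⟩ := Int.le.dest hij
  have h1 := h.local_growth hδ hκ hloc hstep i n
  set j := i + (n : ℤ) with hj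
  obtain ⟨m, hm⟩ := Int.le.dest (show j + 1 ≤ k from hjk)
  have h2 := hrev (-k) m
  simp only [neg_neg] at h2
  rw [show -(-k + (m : ℤ)) = j + 1 by lia, show -(-k + (m : ℤ) + 1) = j by lia] at h2
  rw [dist_comm (q k), dist_comm (q k), dist_comm (q (j + 1)) (q j)] at h2
  have h3 := hstep j
  have h4 := h.local_join (κ₁ := κ + δ) (κ₂ := κ + δ) h1 (w := q k) (by linarith) (by linarith)
  linarith

theorem IsDeltaHyperbolic.exists_near {X : Type*} [MetricSpace X] {δ K K' l : ℝ}
    (h : IsDeltaHyperbolic X δ) (hδ : 0 < δ) (hK : 0 ≤ K) {p : ℤ → X} (hp : IsQuasiLine p K)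
    (hl : ∀ i, dist (p i) (p (i + 1)) ≤ l) {i k : ℤ} {y : X} (hik : i ≤ k)
    (hy : dist y (p i) + dist y (p k) ≤ dist (p i) (p k) + 2 * K') :
    ∃ j, dist y (p j) ≤ K' + 2 * K + 2 * δ + l := by
  have hl0 : 0 ≤ l := dist_nonneg.trans (hl 0)
  by_contra! hcon
  have key : ∀ n : ℕ, i + n ≤ k →
      dist (p i) (p (i + n)) + dist y (p (i + n)) ≤ dist y (p i) + 2 * (K + δ) := by
    intro n
    induction n with
    | zero => intro _; simp; linarith
    | succ n ih =>
      intro hn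
      have e : i + ((n + 1 : ℕ) : ℤ) = i + n + 1 := by push_cast; ring
      rw [e] at hn ⊢
      have h1 := ih (by lia)
      set j := i + (n : ℤ) with hj
      have h2 := hp i (j + 1) k (by lia) hn
      have h3 := hcon j
      have h4 := hl j
      have h5 := dist_triangle4 (p i) (p j) (p (j + 1)) (p k)
      have h6 := dist_triangle_right y (p j) (p (j + 1))
      rcases h.four (p i) (p k) (p (j + 1)) y with h7 | h7
      · rw [dist_comm (p k) y, dist_comm (p (j + 1)) y] at h7
        exfalso
        linarith [dist_triangle (p i) (p j) (p (j + 1)), dist_triangle_right (p i) (p k) y,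
          dist_triangle y (p (j + 1)) (p j), dist_comm (p (j + 1)) (p j)]
      · rw [dist_comm (p i) y, dist_comm (p (j + 1)) y, dist_comm (p k) (p (j + 1))] at h7
        linarith
  obtain ⟨n, rfl⟩ := Int.le.dest hik
  have h1 := key n le_rfl
  have h2 := hcon (i + n)
  linarith

theorem IsDeltaHyperbolic.exists_near_symm {X : Type*} [MetricSpace X] {δ K K' l : ℝ}
    (h : IsDeltaHyperbolic X δ) (hδ : 0 < δ) (hK : 0 ≤ K) {p : ℤ → X} (hp : IsQuasiLine p K)
    (hl : ∀ i, dist (p i) (p (i + 1)) ≤ l) {i k : ℤ} {y : X}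
    (hy : dist y (p i) + dist y (p k) ≤ dist (p i) (p k) + 2 * K') :
    ∃ j, dist y (p j) ≤ K' + 2 * K + 2 * δ + l := by
  rcases le_total i k with hik | hik
  · exact h.exists_near hδ hK hp hl hik hy
  · refine h.exists_near hδ hK hp hl hik (K' := K') ?_
    rw [dist_comm (p k) (p i)]
    linarith

theorem dist_apply_left {X : Type*} [MetricSpace X] (u : X ≃ᵢ X) (a b : X) :
    dist (u a) b = dist a (u⁻¹ b) := by
  have := u.dist_eq a (u⁻¹ b)
  rw [IsometryEquiv.apply_inv_self] at this
  exact this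

theorem IsDeltaHyperbolic.exists_transverse {X : Type*} [MetricSpace X] {δ : ℝ}
    (h : IsDeltaHyperbolic X δ) (hδ : 0 < δ)
    (hgeo : ∀ (x y : X) (R : ℝ), 0 ≤ R → R ≤ dist x y →
      ∃ p, dist x p = R ∧ dist p y = dist x y - R)
    (U : Finset (X ≃ᵢ X)) (hU : ∀ u ∈ U, u⁻¹ ∈ U) {L : ℝ} (hL : 1000 * δ ≤ L)
    (hmin : ∀ x, ∃ u ∈ U, L ≤ dist x (u x)) {x : X} (hx : ∀ u ∈ U, dist x (u x) < L + δ) :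
    ∃ u ∈ U, ∃ v ∈ U, L - 12 * δ ≤ dist x (u x) ∧ L - 12 * δ ≤ dist x (v x) ∧
      dist x (u x) + dist x (v x) ≤ dist (u⁻¹ x) (v x) + 8 * δ := by
  by_contra! hcon
  obtain ⟨u₀, hu₀, hLu₀⟩ := hmin x
  obtain ⟨x', hx1, hx2⟩ := hgeo x (u₀ x) (4 * δ) (by linarith) (by linarith)
  have hclose : ∀ u ∈ U, L - 12 * δ ≤ dist x (u x) →
      dist x' (u x) ≤ dist x (u x) - 2 * δ := by
    intro u hu hLu
    have h1 := hcon u⁻¹ (hU u hu) u₀ hu₀ (by rw [dist_self_inv]; exact hLu) (by linarith)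
    rw [inv_inv, dist_self_inv] at h1
    rcases h.four x' (u x) x (u₀ x) with h2 | h2
    · rw [dist_comm x' x] at h2; linarith
    · rw [dist_comm (u x) x] at h2; linarith
  obtain ⟨u, hu, hLu⟩ := hmin x'
  have hux := hx u hu
  by_cases hbig : L - 12 * δ ≤ dist x (u x)
  · have h1 := hclose u hu hbig
    have h2 := hclose u⁻¹ (hU u hu) (by rw [dist_self_inv]; exact hbig)
    rw [dist_self_inv, ← dist_apply_left] at h2
    have h3 := u.dist_eq x' x
    rw [dist_comm x' x] at h3
    rcases h.four x' (u x') x (u x) with h4 | h4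
    · rw [dist_comm x' x] at h4; linarith
    · linarith
  · have h3 := u.dist_eq x' x
    rw [dist_comm x' x] at h3
    have := dist_triangle4 x' x (u x) (u x')
    rw [dist_comm x' x, dist_comm (u x)] at this
    linarith

theorem IsDeltaHyperbolic.exists_biTransverse {X : Type*} [MetricSpace X] {δ : ℝ}
    (h : IsDeltaHyperbolic X δ) (hδ : 0 < δ)
    (hgeo : ∀ (x y : X) (R : ℝ), 0 ≤ R → R ≤ dist x y →
      ∃ p, dist x p = R ∧ dist p y = dist x y - R)
    (U : Finset (X ≃ᵢ X)) (hU : ∀ u ∈ U, u⁻¹ ∈ U) {L : ℝ} (hL : 1000 * δ ≤ L)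
    (hmin : ∀ x, ∃ u ∈ U, L ≤ dist x (u x)) {x : X} (hx : ∀ u ∈ U, dist x (u x) < L + δ) :
    ∃ u ∈ U, ∃ v ∈ U, L - 12 * δ ≤ dist x (u x) ∧ L - 12 * δ ≤ dist x (v x) ∧
      dist x (u x) + dist x (v x) ≤ dist (u⁻¹ x) (v x) + 12 * δ ∧
      dist x (u x) + dist x (v x) ≤ dist (v⁻¹ x) (u x) + 12 * δ := by
  obtain ⟨u, hu, v, hv, hLu, hLv, huv⟩ := h.exists_transverse hδ hgeo U hU hL hmin hx
  by_cases h1 : dist x (u x) + dist x (v x) ≤ dist (v⁻¹ x) (u x) + 12 * δ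
  · exact ⟨u, hu, v, hv, hLu, hLv, by linarith, h1⟩
  by_cases h2 : dist x (u x) + dist x (u x) ≤ dist (u⁻¹ x) (u x) + 12 * δ
  · exact ⟨u, hu, u, hu, hLu, hLu, h2, h2⟩
  by_cases h3 : dist x (v x) + dist x (v x) ≤ dist (v⁻¹ x) (v x) + 12 * δ
  · exact ⟨v, hv, v, hv, hLv, hLv, h3, h3⟩
  exfalso
  push Not at h1 h2 h3
  have e1 := dist_self_inv u x
  have e2 := dist_self_inv v x
  have a1 := h.four (u⁻¹ x) (v x) x (v⁻¹ x)
  have a2 := h.four (u⁻¹ x) (v⁻¹ x) x (u x)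
  rw [dist_comm (u⁻¹ x) x, dist_comm (v x) x, dist_comm (v x) (v⁻¹ x)] at a1
  rw [dist_comm (u⁻¹ x) x, dist_comm (v⁻¹ x) x] at a2
  rcases a1 with a1 | a1 <;> rcases a2 with a2 | a2 <;> linarith

theorem IsDeltaHyperbolic.translation_quasiLine {X : Type*} [MetricSpace X] {δ : ℝ}
    (h : IsDeltaHyperbolic X δ) (hδ : 0 < δ) {u v : X ≃ᵢ X} {x : X}
    (hu : 100 * δ ≤ dist x (u x)) (hv : 100 * δ ≤ dist x (v x))
    (h1 : dist x (u x) + dist x (v x) ≤ dist (u⁻¹ x) (v x) + 12 * δ)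
    (h2 : dist x (u x) + dist x (v x) ≤ dist (v⁻¹ x) (u x) + 12 * δ) :
    dist x (u x) + dist x (v x) - 12 * δ ≤ dist x ((u * v) x) ∧
      IsQuasiLine (fun i : ℤ => ((u * v) ^ i) x) (10 * δ) := by
  have e1 := dist_self_inv u x
  have e2 := dist_self_inv v x
  have e0 := dist_self_inv (u * v) x
  have f1 : dist (u x) ((u * v) x) = dist x (v x) := u.dist_eq _ _
  have f2 : dist x ((u * v) x) = dist (u⁻¹ x) (v x) := by
    have := u.dist_eq (u⁻¹ x) (v x)
    rw [IsometryEquiv.apply_inv_self] at this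
    exact this
  have f3 : dist ((u * v)⁻¹ x) (v⁻¹ x) = dist x (u x) := by
    rw [mul_inv_rev]
    have := (v⁻¹).dist_eq (u⁻¹ x) x
    rw [dist_comm _ x, e1] at this
    exact this
  have hd : dist x (u x) + dist x (v x) - 12 * δ ≤ dist x ((u * v) x) := by linarith
  refine ⟨hd, ?_⟩
  have c0 : dist ((u * v)⁻¹ x) (v⁻¹ x) + dist (v⁻¹ x) x ≤
      dist ((u * v)⁻¹ x) x + 2 * (6 * δ) := by
    rw [f3, dist_comm _ x, e2, dist_comm _ x, e0]; linarith
  have c1 : dist (v⁻¹ x) x + dist x (u x) ≤ dist (v⁻¹ x) (u x) + 2 * (6 * δ) := by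
    rw [dist_comm _ x, e2]; linarith
  have c2 : dist x (u x) + dist (u x) ((u * v) x) ≤ dist x ((u * v) x) + 2 * (6 * δ) := by
    linarith
  have c3 := h.local_step c0 c1 (by rw [dist_comm _ x]; linarith)
  have c4 := h.local_join c3 c2 (by linarith)
  have key := h.isQuasiLine (q := fun i : ℤ => ((u * v) ^ i) x) (κ := 8 * δ) hδ (by linarith)
    ?_ ?_
  · rwa [show 8 * δ + 2 * δ = 10 * δ by ring] at key
  · intro i
    have t : ∀ n : ℤ, ((u * v) ^ (i + n)) x =
        ((u * v) ^ (i + 1)) (((u * v) ^ (n - 1)) x) := by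
      intro n
      rw [← IsometryEquiv.mul_apply, ← zpow_add]
      congr 2; ring
    have t0 := t 0
    have t2 := t 2
    rw [add_zero] at t0
    simp only [t0, t2, IsometryEquiv.dist_eq]
    norm_num
    have g1 := ((u * v) ^ (i + 1)).dist_eq ((u * v)⁻¹ x) x
    have g2 := ((u * v) ^ (i + 1)).dist_eq x ((u * v) x)
    simp only [IsometryEquiv.mul_apply, mul_inv_rev] at g1 g2 c4 ⊢
    linarith
  · intro i
    have := ((u * v) ^ i).dist_eq x ((u * v) x)
    simp only [zpow_add_one]
    rw [IsometryEquiv.mul_apply ((u * v) ^ i), this]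
    linarith

/-- The elements of `T` and their inverses displace `o` in quantitatively independent
directions, apart from cancellations `c⁻¹ * c`. -/
structure IsSchottkySet {X : Type*} [MetricSpace X] (T : Set (X ≃ᵢ X)) (o : X) (A : ℝ) :
    Prop where
  inv_left : ∀ c ∈ T, ∀ c' ∈ T, dist o (c o) + A ≤ dist (c⁻¹ o) (c' o)
  inv_right : ∀ c ∈ T, ∀ c' ∈ T, dist o (c' o) + A ≤ dist (c⁻¹ o) (c' o)
  ne : ∀ c ∈ T, ∀ c' ∈ T, c ≠ c' → dist o (c o) + A ≤ dist (c o) (c' o)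

theorem IsSchottkySet.back {X : Type*} [MetricSpace X] {δ A : ℝ} (h : IsDeltaHyperbolic X δ)
    (hδ : 0 < δ) (hA : 3 * δ ≤ A) {T : Set (X ≃ᵢ X)} {o : X} (hT : IsSchottkySet T o A)
    (r : List (X ≃ᵢ X)) (hr : ∀ c ∈ r, c ∈ T) :
    ∀ c ∈ T, ∀ y, dist o (c o) + A ≤ dist (c o) y → dist o y + A ≤ dist (c o) y →
      dist ((c :: r).prod o) o + (A - 2 * δ) ≤ dist ((c :: r).prod o) y := by
  induction r with
  | nil =>
    intro c _ y h1 _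
    simp only [List.prod_cons, List.prod_nil, mul_one]
    rw [dist_comm (c o) o]
    linarith
  | cons c' r ih =>
    intro c hc y h1 h2
    have hc' : c' ∈ T := hr c' (by simp)
    have h3 := ih (fun d hd => hr d (by simp [hd])) c' hc' (c⁻¹ o)
      (by have := hT.inv_right c hc c' hc'; rw [dist_comm (c' o)]; exact this)
      (by have := hT.inv_left c hc c' hc'; rw [dist_self_inv, dist_comm (c' o)]; exact this)
    set w := (c' :: r).prod with hw
    have e : (c :: c' :: r).prod = c * w := by rw [List.prod_cons]
    rw [e, IsometryEquiv.mul_apply]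
    have h4 : dist (c (w o)) (c o) = dist (w o) o := c.dist_eq _ _
    have h5 : dist (c (w o)) o = dist (w o) (c⁻¹ o) := dist_apply_left c _ _
    refine h.growth_step hδ hA (y₀ := c o) ?_ ?_ h2
    · rw [h4, h5]; exact h3
    · rw [dist_comm (c o) o]; exact h1

theorem IsSchottkySet.forward {X : Type*} [MetricSpace X] {δ A : ℝ}
    (h : IsDeltaHyperbolic X δ)
    (hδ : 0 < δ) (hA : 3 * δ ≤ A) {T : Set (X ≃ᵢ X)} {o : X} (hT : IsSchottkySet T o A)
    (z : X) (r : List (X ≃ᵢ X)) (hr : ∀ c ∈ r, c ∈ T) :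
    ∀ g : X ≃ᵢ X, ∀ c ∈ T, dist z (g o) + (A - 2 * δ) ≤ dist z ((g * c) o) →
      dist z (g o) + (A - 2 * δ) ≤ dist z ((g * (c :: r).prod) o) := by
  induction r with
  | nil =>
    intro g c _ h1
    simpa using h1
  | cons c' r ih =>
    intro g c hc h1
    have hc' : c' ∈ T := hr c' (by simp)
    have e1 : dist (g o) ((g * c) o) = dist o (c o) := g.dist_eq _ _
    have e2 : dist ((g * c) o) ((g * c * c') o) = dist o (c' o) := (g * c).dist_eq _ _
    have e3 : dist (g o) ((g * c * c') o) = dist (c⁻¹ o) (c' o) := by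
      have := (g * c).dist_eq (c⁻¹ o) (c' o)
      simp only [IsometryEquiv.mul_apply, IsometryEquiv.apply_inv_self] at this ⊢
      exact this
    have h2 := h.growth_step hδ hA (z := z) (y₀ := g o) (y₂ := (g * c * c') o) h1
      (by rw [e1, e3]; exact hT.inv_left c hc c' hc')
      (by rw [e2, e3]; exact hT.inv_right c hc c' hc')
    have h3 := ih (fun d hd => hr d (by simp [hd])) (g * c) c' hc' h2
    rw [List.prod_cons, ← mul_assoc]
    linarith

theorem IsSchottkySet.prod_injective {X : Type*} [MetricSpace X] {δ A : ℝ}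
    (h : IsDeltaHyperbolic X δ)
    (hδ : 0 < δ) (hA : 3 * δ ≤ A) {T : Set (X ≃ᵢ X)} {o : X} (hT : IsSchottkySet T o A) :
    ∀ L L' : List (X ≃ᵢ X), L.length = L'.length → (∀ c ∈ L, c ∈ T) → (∀ c ∈ L', c ∈ T) →
      L.prod = L'.prod → L = L' := by
  intro L
  induction L with
  | nil =>
    intro L' hl _ _ _
    exact (List.length_eq_zero_iff.mp hl.symm).symm
  | cons c r ih =>
    intro L' hl hL hL' hp
    cases L' with
    | nil => simp at hl
    | cons c' r' =>
      have hc : c ∈ T := hL c (by simp)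
      have hc' : c' ∈ T := hL' c' (by simp)
      by_cases hcc : c = c'
      · subst hcc
        rw [List.prod_cons, List.prod_cons, mul_right_inj] at hp
        rw [ih r' (by simpa using hl) (fun d hd => hL d (by simp [hd]))
          (fun d hd => hL' d (by simp [hd])) hp]
      · exfalso
        have h1 := hT.ne c hc c' hc' hcc
        have h2 := hT.ne c' hc' c hc (Ne.symm hcc)
        rw [dist_comm (c' o)] at h2
        have h3 := hT.back h hδ hA r (fun d hd => hL d (by simp [hd])) c hc (c' o) h1 h2
        have h4 := hT.forward h hδ hA ((c :: r).prod o) r' (fun d hd => hL' d (by simp [hd]))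
          1 c' hc' (by simpa using h3)
        rw [one_mul, ← hp, dist_self] at h4
        have := dist_nonneg (x := (c :: r).prod o) (y := (1 : X ≃ᵢ X) o)
        linarith

theorem pow_le_ncard_of_isSchottkySet {X : Type*} [MetricSpace X] {δ A : ℝ}
    (h : IsDeltaHyperbolic X δ) (hδ : 0 < δ) (hA : 3 * δ ≤ A) {Γ : Subgroup (X ≃ᵢ X)}
    {a b : ↥Γ} {o : X} (hT : IsSchottkySet {a.1, b.1} o A) (hab : a ≠ b) {S : Set ↥Γ} {m : ℕ}
    (ha : a ∈ wordBall S m) (hb : b ∈ wordBall S m) (n : ℕ)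
    (hfin : (wordBall S (n * m)).Finite) : 2 ^ n ≤ (wordBall S (n * m)).ncard := by
  let c : Bool → ↥Γ := fun i => if i then a else b
  let w : (Fin n → Bool) → ↥Γ := fun f => (List.ofFn fun i => c (f i)).prod
  have hc : Function.Injective c := by
    intro i j hij
    cases i <;> cases j <;> simp_all [c]
  have hw : ∀ f, w f ∈ wordBall S (n * m) := by
    intro f
    have key : ∀ L : List ↥Γ, (∀ d ∈ L, d ∈ wordBall S m) → L.prod ∈ wordBall S (L.length * m) := by
      intro L
      induction L with
      | nil => intro _; exact one_mem_wordBall S _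
      | cons d L ih =>
        intro hL
        rw [List.prod_cons, List.length_cons, add_mul, one_mul, add_comm]
        exact mul_mem_wordBall (hL d (by simp)) (ih fun e he => hL e (by simp [he]))
    have := key (List.ofFn fun i => c (f i)) (by
      intro d hd
      rw [List.mem_ofFn] at hd
      obtain ⟨i, rfl⟩ := hd
      simp only [c]; split_ifs <;> assumption)
    rwa [List.length_ofFn] at this
  have hinj : Function.Injective w := by
    intro f f' hff
    have h1 : ((List.ofFn fun i => c (f i)).map Γ.subtype).prod =
        ((List.ofFn fun i => c (f' i)).map Γ.subtype).prod := by
      rw [← map_list_prod, ← map_list_prod]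
      exact congrArg _ hff
    have hmem : ∀ f : Fin n → Bool, ∀ d ∈ (List.ofFn fun i => c (f i)).map Γ.subtype,
        d ∈ ({a.1, b.1} : Set (X ≃ᵢ X)) := by
      intro f d hd
      rw [List.mem_map] at hd
      obtain ⟨e, he, rfl⟩ := hd
      rw [List.mem_ofFn] at he
      obtain ⟨i, rfl⟩ := he
      simp only [c]; split_ifs <;> simp
    have h2 := hT.prod_injective h hδ hA _ _ (by simp) (hmem f) (hmem f') h1
    have h3 := List.map_injective_iff.mpr Γ.subtype_injective h2
    have h4 := List.ofFn_injective h3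
    funext i
    exact hc (congrFun h4 i)
  have : (Set.range w).ncard = 2 ^ n := by
    rw [← Set.image_univ, Set.ncard_image_of_injective _ hinj, Set.ncard_univ]
    simp
  rw [← this]
  exact Set.ncard_le_ncard (by rintro _ ⟨f, rfl⟩; exact hw f) hfin

theorem IsQuasiLine.mul_le_dist {X : Type*} [MetricSpace X] {q : ℤ → X} {K l : ℝ}
    (h : IsQuasiLine q K) (hl : ∀ i, l ≤ dist (q i) (q (i + 1))) (i : ℤ) (n : ℕ) :
    n * (l - 2 * K) ≤ dist (q i) (q (i + n)) := by
  induction n with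
  | zero => simp
  | succ n ih =>
    have e : i + ((n + 1 : ℕ) : ℤ) = i + n + 1 := by push_cast; ring
    have h1 := h i (i + n) (i + n + 1) (by lia) (by lia)
    have h2 := hl (i + n)
    rw [e]
    push_cast
    linarith

theorem IsQuasiLine.map {X : Type*} [MetricSpace X] {q : ℤ → X} {K : ℝ}
    (h : IsQuasiLine q K) (s : X ≃ᵢ X) : IsQuasiLine (fun i => s (q i)) K := by
  intro i j k hij hjk
  simp only [IsometryEquiv.dist_eq]
  exact h i j k hij hjk

theorem IsDeltaHyperbolic.replace_end {X : Type*} [MetricSpace X] {δ κ D : ℝ}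
    (h : IsDeltaHyperbolic X δ) {a y a' P : X}
    (h1 : dist a y + dist y a' ≤ dist a a' + 2 * κ) (h2 : dist a' P ≤ D)
    (h3 : D + κ + δ < dist y a') :
    dist a y + dist y P ≤ dist a P + 2 * (κ + δ) := by
  have h5 := dist_triangle_right y a' P
  rcases h.four a a' y P with h4 | h4
  · linarith
  · rw [dist_comm a' y] at h4; linarith

theorem IsDeltaHyperbolic.near_mul {X : Type*} [MetricSpace X] {δ l : ℝ}
    (h : IsDeltaHyperbolic X δ) (hδ : 0 < δ) {q : ℤ → X} (hq : IsQuasiLine q (10 * δ))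
    (hl : ∀ i, dist (q i) (q (i + 1)) = l) (hδl : 1000 * δ ≤ l) {s t : X ≃ᵢ X}
    (hs : ∀ k, ∃ j, dist (q k) (s (q j)) ≤ 2 * l) (ht : ∀ k, ∃ j, dist (q k) (t (q j)) ≤ 2 * l)
    (k : ℤ) : ∃ j, dist (q k) ((s * t) (q j)) ≤ 2 * l := by
  have hfar : ∀ k, ∃ j, dist (q k) ((s * t) (q j)) ≤ 4 * l := by
    intro k
    obtain ⟨i, hi⟩ := hs k
    obtain ⟨j, hj⟩ := ht i
    refine ⟨j, ?_⟩
    have h1 : dist (s (q i)) ((s * t) (q j)) = dist (q i) (t (q j)) := s.dist_eq _ _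
    linarith [dist_triangle (q k) (s (q i)) ((s * t) (q j))]
  obtain ⟨j₁, h1⟩ := hfar (k - 20)
  obtain ⟨j₂, h2⟩ := hfar (k + 20)
  have h3 := hq (k - 20) k (k + 20) (by lia) (by lia)
  have h4 := hq.mul_le_dist (fun i => (hl i).ge) (k - 20) 20
  have h5 := hq.mul_le_dist (fun i => (hl i).ge) k 20
  push_cast at h4 h5
  rw [sub_add_cancel] at h4
  have h6 := h.replace_end h3 h2 (by linarith)
  rw [dist_comm (q (k - 20)) (q k), dist_comm (q (k - 20)) ((s * t) (q j₂)),
    add_comm (dist (q k) (q (k - 20)))] at h6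
  rw [dist_comm (q k) ((s * t) (q j₂))] at h6
  have h7 := h.replace_end h6 h1 (by rw [dist_comm]; linarith)
  rw [dist_comm ((s * t) (q j₂)) (q k)] at h7
  obtain ⟨j, hj⟩ := h.exists_near_symm hδ (by linarith) (hq.map (s * t)) (l := l)
    (fun i => by simp only [IsometryEquiv.dist_eq]; exact (hl i).le) h7
  exact ⟨j, by linarith⟩

theorem isVirtuallyNilpotent_of_near_powers {X : Type*} [MetricSpace X]
    {Γ : Subgroup (X ≃ᵢ X)} (hΓ : IsDiscreteSubgroup Γ) (g : ↥Γ) (x : X) (R : ℝ)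
    (h : ∀ γ : ↥Γ, ∃ j : ℤ, dist x ((γ * g ^ j).1 x) ≤ R) : IsVirtuallyNilpotent ↥Γ := by
  obtain ⟨A, hA⟩ := hΓ.exists_finset x R
  refine ⟨Subgroup.zpowers g, ?_, ?_⟩
  · have : Finite (↥Γ ⧸ Subgroup.zpowers g) := by
      refine Finite.of_surjective (fun a : A => (QuotientGroup.mk a.1 : ↥Γ ⧸ Subgroup.zpowers g)) ?_
      intro c
      obtain ⟨γ, rfl⟩ := QuotientGroup.mk_surjective c
      obtain ⟨j, hj⟩ := h γ
      refine ⟨⟨γ * g ^ j, (hA _).mpr hj⟩, ?_⟩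
      exact QuotientGroup.mk_mul_of_mem γ (Subgroup.zpow_mem_zpowers g j)
    exact Subgroup.finiteIndex_of_finite_quotient
  · let _ : CommGroup ↥(Subgroup.zpowers g) := IsCyclic.commGroup
    exact CommGroup.isNilpotent

theorem isSchottkySet_pair {X : Type*} [MetricSpace X] {a b : X ≃ᵢ X} {o : X} {A D : ℝ}
    (ha : dist o (a o) + A ≤ D) (hb : dist o (b o) + A ≤ D) (haa : D ≤ dist (a⁻¹ o) (a o))
    (hbb : D ≤ dist (b⁻¹ o) (b o)) (hab : D ≤ dist (a⁻¹ o) (b o))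
    (hba : D ≤ dist (b⁻¹ o) (a o)) (hne : D ≤ dist (a o) (b o)) :
    IsSchottkySet {a, b} o A := by
  constructor
  · rintro c (rfl | rfl) c' (rfl | rfl) <;> linarith
  · rintro c (rfl | rfl) c' (rfl | rfl) <;> linarith
  · rintro c (rfl | rfl) c' (rfl | rfl) hcc
    · exact absurd rfl hcc
    · linarith
    · rw [dist_comm (c o) (c' o)]; linarith
    · exact absurd rfl hcc

theorem IsDeltaHyperbolic.diverge {X : Type*} [MetricSpace X] {δ l : ℝ}
    (h : IsDeltaHyperbolic X δ) (hδ : 0 < δ) {q p : ℤ → X} (hq : IsQuasiLine q (10 * δ))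
    (hp : IsQuasiLine p (10 * δ)) (hql : ∀ i, dist (q i) (q (i + 1)) ≤ l)
    (hpl : ∀ i, dist (p i) (p (i + 1)) ≤ l) (hδl : 1000 * δ ≤ l)
    (h0 : 5 * dist (q 0) (p 0) ≤ 3 * l) {k n j : ℤ} (hk : 0 ≤ k) (hn : k < n)
    (hfar : ∀ j, 2 * l < dist (q (k + 1)) (p j)) :
    dist (q k) (q n) + dist (q k) (p j) ≤ dist (q n) (p j) + 17 / 5 * l := by
  by_contra! hcon
  have h1 := hq 0 (k + 1) n (by lia) (by lia)
  have h2 := hql k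
  have h3 := dist_triangle (q k) (q (k + 1)) (q n)
  have h4 := dist_triangle (q k) (q (k + 1)) (p j)
  have h5 := dist_triangle (q 0) (p 0) (q n)
  have h6 := dist_triangle_left (p 0) (q (k + 1)) (q 0)
  have h8 : dist (q (k + 1)) (p 0) + dist (q (k + 1)) (p j) ≤
      dist (p 0) (p j) + 2 * (3 / 5 * l + 11 * δ) := by
    rw [dist_comm (q (k + 1)) (p 0)]
    rcases h.four (p 0) (q n) (q (k + 1)) (p j) with h7 | h7
    · rw [dist_comm (p 0) (q n)] at h7
      linarith [dist_comm (p 0) (q n)]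
    · rw [dist_comm (q n) (q (k + 1))] at h7
      linarith
  obtain ⟨i, hi⟩ := h.exists_near_symm hδ (by linarith) hp hpl h8
  linarith [hfar i]

theorem IsDeltaHyperbolic.exists_schottky_pos {X : Type*} [MetricSpace X] {δ l : ℝ}
    (h : IsDeltaHyperbolic X δ) (hδ : 0 < δ) {g s : X ≃ᵢ X} {x : X}
    (hq : IsQuasiLine (fun i : ℤ => (g ^ i) x) (10 * δ)) (hl : dist x (g x) = l)
    (hδl : 1000 * δ ≤ l) (hs : 5 * dist x (s x) ≤ 3 * l) (n : ℕ)
    (hn : ∀ j : ℤ, 2 * l < dist ((g ^ (n : ℤ)) x) (s ((g ^ j) x))) :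
    ∃ o b, (b = s * g ^ 20 * s⁻¹ ∨ b = s * g⁻¹ ^ 20 * s⁻¹) ∧ g ^ 20 ≠ b ∧
      IsSchottkySet {g ^ 20, b} o l := by
  classical
  set q : ℤ → X := fun i => (g ^ i) x with hqdef
  set p : ℤ → X := fun i => s (q i) with hpdef
  have hstep : ∀ i, dist (q i) (q (i + 1)) = l := by
    intro i
    simp only [hqdef, zpow_add_one, IsometryEquiv.mul_apply, IsometryEquiv.dist_eq]
    exact hl
  have hp : IsQuasiLine p (10 * δ) := hq.map s
  have hpstep : ∀ i, dist (p i) (p (i + 1)) = l := by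
    intro i
    simp only [hpdef, IsometryEquiv.dist_eq]
    exact hstep i
  have hex : ∃ n : ℕ, ∀ j : ℤ, 2 * l < dist (q n) (p j) := ⟨n, hn⟩
  obtain ⟨k, hk, j₀, hj₀⟩ : ∃ k : ℕ, (∀ j : ℤ, 2 * l < dist (q (k + 1)) (p j)) ∧
      ∃ j₀, dist (q k) (p j₀) ≤ 2 * l := by
    rcases hm : Nat.find hex with _ | k
    · exfalso
      have h1 := Nat.find_spec hex 0
      rw [hm] at h1
      simp only [hpdef, hqdef, Nat.cast_zero, zpow_zero] at h1
      change 2 * l < dist x (s x) at h1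
      have h2 := dist_nonneg (x := x) (y := s x)
      linarith
    · refine ⟨k, ?_, ?_⟩
      · have h1 := Nat.find_spec hex
        rw [hm] at h1
        simpa using h1
      · have h1 := Nat.find_min hex (m := k) (by lia)
        push Not at h1
        exact h1
  set o := q k with ho
  have hdiv : ∀ j, dist o (q (k + 20)) + dist o (p j) ≤ dist (q (k + 20)) (p j) + 17 / 5 * l :=
    fun j => h.diverge hδ hq hp (fun i => (hstep i).le) (fun i => (hpstep i).le) hδl
      (by simpa [hpdef, hqdef] using hs) (by lia) (by lia) hk
  have act : ∀ (e i : ℤ), (g ^ e) (q i) = q (i + e) := by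
    intro e i
    simp only [hqdef]
    rw [← IsometryEquiv.mul_apply, ← zpow_add, add_comm]
  have act' : ∀ (e i : ℤ), (s * g ^ e * s⁻¹) (p i) = p (i + e) := by
    intro e i
    simp only [hpdef, IsometryEquiv.mul_apply, IsometryEquiv.inv_apply_self, act]
  set L := dist (q 0) (q 20) with hL
  have hqL : ∀ i, dist (q i) (q (i + 20)) = L := by
    intro i
    have := (g ^ i).dist_eq (q 0) (q 20)
    rw [act, act, zero_add, add_comm] at this
    exact this
  have hpL : ∀ i, dist (p i) (p (i + 20)) = L := by
    intro i
    simp only [hpdef, IsometryEquiv.dist_eq]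
    exact hqL i
  have hLl : 19 * l ≤ L := by
    have := hq.mul_le_dist (fun i => (hstep i).ge) 0 20
    norm_num at this
    linarith
  have ea : (g ^ 20) o = q (k + 20) := by
    have := act 20 k
    exact_mod_cast this
  have ea' : (g ^ 20)⁻¹ o = q (k - 20) := by
    have := act (-20) k
    rw [zpow_neg] at this
    exact_mod_cast this
  have da : dist o (q (k + 20)) = L := hqL k
  have da' : dist (q (k - 20)) o = L := by
    have := hqL (k - 20)
    rwa [sub_add_cancel] at this
  have daa : dist (q (k - 20)) o + dist o (q (k + 20)) ≤ dist (q (k - 20)) (q (k + 20)) +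
    2 * (10 * δ) := hq (k - 20) k (k + 20) (by lia) (by lia)
  have dp := hpL j₀
  have dp' := hpL (j₀ - 20)
  rw [sub_add_cancel, dist_comm] at dp'
  have dpp := hp (j₀ - 20) j₀ (j₀ + 20) (by lia) (by lia)
  set B := s * g ^ 20 * s⁻¹ with hB
  have eB : B (p j₀) = p (j₀ + 20) := by
    have := act' 20 j₀
    exact_mod_cast this
  have eB' : B⁻¹ (p j₀) = p (j₀ - 20) := by
    have := act' (-20) j₀
    rw [zpow_neg] at this
    rw [sub_eq_add_neg, ← this]
    simp only [hB, mul_inv_rev, inv_inv, mul_assoc]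
    norm_cast
  have nB : dist (B o) (p (j₀ + 20)) ≤ 2 * l := by rw [← eB, IsometryEquiv.dist_eq]; exact hj₀
  have nB' : dist (B⁻¹ o) (p (j₀ - 20)) ≤ 2 * l := by
    rw [← eB', IsometryEquiv.dist_eq]; exact hj₀
  have t1 := dist_triangle_right (p j₀) (p (j₀ + 20)) o
  have t1' := dist_triangle_right (p j₀) (p (j₀ - 20)) o
  have t2 := dist_triangle o (p j₀) (p (j₀ + 20))
  have t3 := dist_triangle o (p j₀) (p (j₀ - 20))
  have t4 := dist_triangle_right o (B o) (p (j₀ + 20))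
  have e1 := dist_self_inv B o
  have u1 := hdiv (j₀ + 20)
  have u2 := hdiv (j₀ - 20)
  have v1 := dist_triangle_right (q (k + 20)) (p (j₀ + 20)) (B o)
  have v2 := dist_triangle_right (q (k + 20)) (p (j₀ - 20)) (B⁻¹ o)
  have v3 := dist_triangle4 (p (j₀ - 20)) (B⁻¹ o) (B o) (p (j₀ + 20))
  have w1 := dist_triangle_right (q (k - 20)) (p (j₀ + 20)) (B o)
  have w2 := dist_triangle_right (q (k - 20)) (p (j₀ - 20)) (B⁻¹ o)
  have hfour := h.four (p (j₀ + 20)) (p (j₀ - 20)) o (q (k - 20))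
  have c1 := dist_comm o (p (j₀ + 20))
  have c2 := dist_comm o (p (j₀ - 20))
  have c3 := dist_comm (p (j₀ + 20)) (B o)
  have c4 := dist_comm (p (j₀ - 20)) (B⁻¹ o)
  have c5 := dist_comm (p (j₀ + 20)) (p (j₀ - 20))
  have c6 := dist_comm (p j₀) (p (j₀ - 20))
  have c7 := dist_comm (p j₀) o
  have c8 := dist_comm o (q (k - 20))
  have c9 := dist_comm (p (j₀ + 20)) (q (k - 20))
  have c10 := dist_comm (p (j₀ - 20)) (q (k - 20))
  have c11 := dist_comm (q (k + 20)) (B⁻¹ o)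
  have c12 := dist_comm (q (k + 20)) (B o)
  have c13 := dist_comm (B o) (B⁻¹ o)
  have hBa : 2 * L - 8 * l ≤ dist (q (k + 20)) (B o) := by linarith
  have hBa' : 2 * L - 8 * l ≤ dist (q (k + 20)) (B⁻¹ o) := by linarith
  have hBB : 2 * L - 8 * l ≤ dist (B⁻¹ o) (B o) := by linarith
  have hBo : dist o (B o) ≤ L + 4 * l := by linarith
  have hne : ∀ c : X ≃ᵢ X, 2 * L - 8 * l ≤ dist (q (k + 20)) (c o) → g ^ 20 ≠ c := by
    rintro c hc rfl
    rw [ea, dist_self] at hc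
    linarith
  rcases hfour with h1 | h1
  · refine ⟨o, B⁻¹, Or.inr ?_, hne _ hBa', isSchottkySet_pair (D := 2 * L - 8 * l) ?_ ?_ ?_ ?_ ?_ ?_ ?_⟩
    · simp only [hB, mul_inv_rev, inv_inv, inv_pow, mul_assoc]
    all_goals try simp only [ea, ea', inv_inv]
    all_goals linarith
  · refine ⟨o, B, Or.inl rfl, hne _ hBa, isSchottkySet_pair (D := 2 * L - 8 * l) ?_ ?_ ?_ ?_ ?_ ?_ ?_⟩
    all_goals try simp only [ea, ea']
    all_goals linarith

theorem IsDeltaHyperbolic.exists_schottky {X : Type*} [MetricSpace X] {δ l : ℝ}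
    (h : IsDeltaHyperbolic X δ) (hδ : 0 < δ) {g s : X ≃ᵢ X} {x : X}
    (hq : IsQuasiLine (fun i : ℤ => (g ^ i) x) (10 * δ)) (hl : dist x (g x) = l)
    (hδl : 1000 * δ ≤ l) (hs : 5 * dist x (s x) ≤ 3 * l) (n : ℤ)
    (hn : ∀ j : ℤ, 2 * l < dist ((g ^ n) x) (s ((g ^ j) x))) :
    ∃ o a b, (a = g ^ 20 ∨ a = g⁻¹ ^ 20) ∧ (b = s * g ^ 20 * s⁻¹ ∨ b = s * g⁻¹ ^ 20 * s⁻¹) ∧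
      a ≠ b ∧ IsSchottkySet {a, b} o l := by
  obtain ⟨m, rfl | rfl⟩ := n.eq_nat_or_neg
  · obtain ⟨o, b, h1, h2⟩ := h.exists_schottky_pos hδ hq hl hδl hs m hn
    exact ⟨o, _, b, Or.inl rfl, h1, h2⟩
  · obtain ⟨o, b, h1, h2⟩ := h.exists_schottky_pos hδ (g := g⁻¹) (s := s) (x := x) (l := l)
      (by have := hq.rev; simpa only [inv_zpow'] using this) (by rw [dist_self_inv, hl]) hδl hs m
      (by
        intro j
        have := hn (-j)
        simpa only [inv_zpow'] using this)
    exact ⟨o, _, b, Or.inr rfl, by rw [inv_inv] at h1; exact h1.symm, h2⟩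

theorem exists_almost_minimal_displacement {X : Type*} [MetricSpace X] [Nonempty X] {δ C : ℝ}
    (hδ : 0 < δ) (U : Finset (X ≃ᵢ X)) (hC : ∀ x, ∃ u ∈ U, C < dist x (u x)) :
    ∃ L, C ≤ L ∧ (∀ x, ∃ u ∈ U, L ≤ dist x (u x)) ∧ ∃ x, ∀ u ∈ U, dist x (u x) < L + δ := by
  obtain ⟨x₀⟩ := ‹Nonempty X›
  obtain ⟨u₀, hu₀, -⟩ := hC x₀
  set A : Set ℝ := {r | ∃ x, ∀ u ∈ U, dist x (u x) ≤ r} with hA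
  have hmax : ∀ x : X, ∃ u ∈ U, dist x (u x) ∈ A := by
    intro x
    obtain ⟨u, hu, hmax⟩ := U.exists_max_image (fun u => dist x (u x)) ⟨u₀, hu₀⟩
    exact ⟨u, hu, x, hmax⟩
  have hbdd : BddBelow A := by
    refine ⟨0, ?_⟩
    rintro r ⟨x, hx⟩
    exact dist_nonneg.trans (hx u₀ hu₀)
  have hne : A.Nonempty := by
    obtain ⟨u, -, hu⟩ := hmax x₀
    exact ⟨_, hu⟩
  refine ⟨sInf A, le_csInf hne ?_, fun x => ?_, ?_⟩
  · rintro r ⟨x, hx⟩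
    obtain ⟨u, hu, hCu⟩ := hC x
    exact hCu.le.trans (hx u hu)
  · obtain ⟨u, hu, hA⟩ := hmax x
    exact ⟨u, hu, csInf_le hbdd hA⟩
  · obtain ⟨r, ⟨x, hx⟩, hr⟩ := exists_lt_of_csInf_lt hne (lt_add_of_pos_right (sInf A) hδ)
    exact ⟨x, fun u hu => (hx u hu).trans_lt hr⟩

open scoped Pointwise Classical in
theorem wordBall_subset_pow {G : Type*} [Group G] (S : Finset G) (n : ℕ) :
    wordBall (S : Set G) n ⊆ (((insert 1 S) ^ n : Finset G) : Set G) := by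
  rintro _ ⟨L, hn, hL, rfl⟩
  induction n generalizing L with
  | zero => simp [List.length_eq_zero_iff.mp (Nat.le_zero.mp hn)]
  | succ n ih =>
    rw [pow_succ', Finset.coe_mul]
    cases L with
    | nil => exact ⟨1, by simp, 1, by simpa using ih [] (by simp) (by simp), by simp⟩
    | cons c L =>
      refine ⟨c, ?_, L.prod, ih L (by simpa using hn) fun u hu => hL u (by simp [hu]), by simp⟩
      have := hL c (by simp)
      simp only [Finset.coe_insert]
      exact Or.inr this

theorem finite_wordBall {G : Type*} [Group G] (S : Finset G) (n : ℕ) :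
    (wordBall (S : Set G) n).Finite := by
  classical
  exact (Finset.finite_toSet _).subset (wordBall_subset_pow S n)

theorem ncard_wordBall_le {G : Type*} [Group G] (S : Finset G) (n : ℕ) :
    (wordBall (S : Set G) n).ncard ≤ (S.card + 1) ^ n := by
  classical
  refine (Set.ncard_le_ncard (wordBall_subset_pow S n) (Finset.finite_toSet _)).trans ?_
  rw [Set.ncard_coe_finset]
  exact Finset.card_pow_le.trans (Nat.pow_le_pow_left (Finset.card_insert_le _ _) n)

theorem log_two_div_le_limsup {G : Type*} [Group G] (S : Finset G) {m : ℕ} (hm : 0 < m)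
    (h : ∀ n, 2 ^ n ≤ (wordBall (S : Set G) (n * m)).ncard) :
    Real.log 2 / m ≤ limsup (fun n : ℕ =>
      Real.log ((wordBall (S : Set G) n).ncard : ℝ) / (n : ℝ)) atTop := by
  refine le_limsup_of_frequently_le ?_ ?_
  · rw [frequently_atTop]
    intro N
    refine ⟨(N + 1) * m, by nlinarith, ?_⟩
    have h1 : (2 : ℝ) ^ (N + 1) ≤ ((wordBall (S : Set G) ((N + 1) * m)).ncard : ℝ) := by
      exact_mod_cast h (N + 1)
    have h2 := Real.log_le_log (by positivity) h1
    rw [Real.log_pow] at h2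
    have hm' : (0 : ℝ) < m := by exact_mod_cast hm
    rw [div_le_div_iff₀ hm' (by positivity)]
    push_cast at h2 ⊢
    nlinarith
  · refine ⟨Real.log (S.card + 1), ?_⟩
    rw [eventually_map]
    filter_upwards [eventually_gt_atTop 0] with n hn
    have hn' : (0 : ℝ) < n := by exact_mod_cast hn
    rw [div_le_iff₀ hn', mul_comm, ← Real.log_pow]
    refine Real.log_le_log ?_ (by exact_mod_cast ncard_wordBall_le S n)
    have : 0 < (wordBall (S : Set G) n).ncard :=
      (Set.ncard_pos (finite_wordBall S n)).mpr ⟨1, one_mem_wordBall _ n⟩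
    exact_mod_cast this

theorem IsNonElementary.not_isVirtuallyNilpotent {X : Type*} [MetricSpace X]
    {Γ : Subgroup (X ≃ᵢ X)} (h : IsNonElementary Γ) : ¬ IsVirtuallyNilpotent ↥Γ := by
  obtain ⟨a, b, ha, hb, hab⟩ := h
  intro hΓ
  refine hab (hΓ.of_injective (Subgroup.inclusion (H := Subgroup.closure {a, b}) (K := Γ) ?_)
    (Subgroup.inclusion_injective _))
  rw [Subgroup.closure_le]
  rintro c (rfl | rfl)
  · exact ha
  · exact hb

theorem IsNonElementary.nonempty {X : Type*} [MetricSpace X]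
    {Γ : Subgroup (X ≃ᵢ X)} (h : IsNonElementary Γ) : Nonempty X := by
  by_contra hX
  rw [not_nonempty_iff] at hX
  refine h.not_isVirtuallyNilpotent ⟨⊤, inferInstance, ?_⟩
  have : Subsingleton (X ≃ᵢ X) := ⟨fun a b => IsometryEquiv.ext fun x => isEmptyElim x⟩
  infer_instance

theorem exists_uniform_growth (P r δ : ℝ) (hr : 0 < r) (hδ : 0 < δ) :
    ∃ m : ℕ, 0 < m ∧ ∀ (X : Type*) [MetricSpace X] (σ : X → X → ℝ → X), IsGCB σ →
      IsDeltaHyperbolic X δ → IsPacked X P r → ∀ Γ : Subgroup (X ≃ᵢ X),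
      (∀ g ∈ Γ, IsSigmaIsometry σ g) → IsDiscreteSubgroup Γ → IsNonElementary Γ →
      ∀ S : Finset ↥Γ, (∀ s ∈ S, s⁻¹ ∈ S) → Subgroup.closure (S : Set ↥Γ) = ⊤ →
      ∀ n, 2 ^ n ≤ (wordBall (S : Set ↥Γ) (n * m)).ncard := by
  classical
  obtain ⟨M, hM⟩ := exists_short_word_bound P r hr (1000 * δ)
  refine ⟨1 + 20 * (M + 1 + (M + 1)) + 1, by lia, ?_⟩
  intro X _ σ hσ hyp hpack Γ hΓσ hΓ hne S hS hcl n
  have hVN := hne.not_isVirtuallyNilpotent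
  have := hne.nonempty
  set W := wordBall (S : Set ↥Γ) (M + 1) with hW
  have hWfin : W.Finite := finite_wordBall S _
  have hS' : ∀ s ∈ (S : Set ↥Γ), s⁻¹ ∈ (S : Set ↥Γ) := hS
  set U : Finset (X ≃ᵢ X) := hWfin.toFinset.image Subtype.val with hU
  have memU : ∀ u, u ∈ U ↔ ∃ w ∈ W, w.1 = u := by
    intro u
    simp only [hU, Finset.mem_image, Set.Finite.mem_toFinset]
  have hUinv : ∀ u ∈ U, u⁻¹ ∈ U := by
    intro u hu
    obtain ⟨w, hw, rfl⟩ := (memU u).mp hu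
    exact (memU _).mpr ⟨w⁻¹, inv_mem_wordBall hS' hw, rfl⟩
  have hbig : ∀ x, ∃ u ∈ U, 1000 * δ < dist x (u x) := by
    intro x
    by_contra! hcon
    refine hVN (hM X σ hσ hpack Γ hΓσ hΓ S hS' hcl x fun g hg => hcon g.1 ?_)
    exact (memU _).mpr ⟨g, wordBall_mono _ (by lia) hg, rfl⟩
  obtain ⟨L, hCL, hmin, x, hx⟩ := exists_almost_minimal_displacement hδ U hbig
  obtain ⟨u, hu, v, hv, hLu, hLv, huv, hvu⟩ := hyp.exists_biTransverse hδ
    (fun x y R h1 h2 => hσ.exists_between x y h1 h2) U hUinv hCL hmin hx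
  obtain ⟨hl, hq⟩ := hyp.translation_quasiLine hδ (by linarith) (by linarith) huv hvu
  obtain ⟨u, hu', rfl⟩ := (memU u).mp hu
  obtain ⟨v, hv', rfl⟩ := (memU v).mp hv
  set g : ↥Γ := u * v with hg
  have hgW : g ∈ wordBall (S : Set ↥Γ) (M + 1 + (M + 1)) := mul_mem_wordBall hu' hv'
  change _ ≤ dist x (g.1 x) at hl
  change IsQuasiLine (fun i : ℤ => (g.1 ^ i) x) _ at hq
  set l := dist x (g.1 x) with hldef
  have hlL : 1000 * δ ≤ l := by linarith
  have hstep : ∀ i : ℤ, dist ((g.1 ^ i) x) ((g.1 ^ (i + 1)) x) = l := by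
    intro i
    rw [zpow_add_one, IsometryEquiv.mul_apply, IsometryEquiv.dist_eq]
  have hsx : ∀ s ∈ (S : Set ↥Γ), 5 * dist x (s.1 x) ≤ 3 * l := by
    intro s hs
    have := hx s.1 ((memU _).mpr ⟨s, wordBall_mono _ (by lia) (mem_wordBall_one hs), rfl⟩)
    linarith
  by_cases hnear : ∀ s ∈ (S : Set ↥Γ), ∀ k : ℤ, ∃ j : ℤ,
      dist ((g.1 ^ k) x) (s.1 ((g.1 ^ j) x)) ≤ 2 * l
  · exfalso
    refine hVN (isVirtuallyNilpotent_of_near_powers hΓ g x (2 * l) fun γ => ?_)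
    have key : ∀ k : ℤ, ∃ j : ℤ, dist ((g.1 ^ k) x) (γ.1 ((g.1 ^ j) x)) ≤ 2 * l := by
      refine symmetric_generation_induction (p := fun γ : ↥Γ => ∀ k : ℤ, ∃ j : ℤ,
        dist ((g.1 ^ k) x) (γ.1 ((g.1 ^ j) x)) ≤ 2 * l) hS' hcl ?_ ?_ γ
      · intro k
        refine ⟨k, ?_⟩
        have : dist ((g.1 ^ k) x) ((1 : X ≃ᵢ X) ((g.1 ^ k) x)) = 0 := dist_self _
        rw [OneMemClass.coe_one, this]
        linarith
      · intro s hs t ht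
        exact hyp.near_mul hδ hq hstep hlL (hnear s hs) ht
    obtain ⟨j, hj⟩ := key 0
    exact ⟨j, hj⟩
  · push Not at hnear
    obtain ⟨s, hs, k, hk⟩ := hnear
    obtain ⟨o, a, b, ha, hb, hab, hT⟩ := hyp.exists_schottky hδ hq hldef.symm hlL (hsx s hs) k hk
    have hg20 := pow_mem_wordBall hgW 20
    have hg20' := pow_mem_wordBall (inv_mem_wordBall hS' hgW) 20
    have hs1 := mem_wordBall_one hs
    have hs1' := inv_mem_wordBall hS' hs1
    obtain ⟨a', ha', rfl⟩ : ∃ a' : ↥Γ, a' ∈ wordBall (S : Set ↥Γ)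
        (1 + 20 * (M + 1 + (M + 1)) + 1) ∧ a'.1 = a := by
      rcases ha with rfl | rfl
      · exact ⟨g ^ 20, wordBall_mono _ (by lia) hg20, rfl⟩
      · exact ⟨g⁻¹ ^ 20, wordBall_mono _ (by lia) hg20', rfl⟩
    obtain ⟨b', hb', rfl⟩ : ∃ b' : ↥Γ, b' ∈ wordBall (S : Set ↥Γ)
        (1 + 20 * (M + 1 + (M + 1)) + 1) ∧ b'.1 = b := by
      rcases hb with rfl | rfl
      · exact ⟨s * g ^ 20 * s⁻¹, mul_mem_wordBall (mul_mem_wordBall hs1 hg20) hs1', rfl⟩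
      · exact ⟨s * g⁻¹ ^ 20 * s⁻¹, mul_mem_wordBall (mul_mem_wordBall hs1 hg20') hs1', rfl⟩
    exact pow_le_ncard_of_isSchottkySet hyp hδ (by linarith) hT
      (fun h => hab (congrArg Subtype.val h)) ha' hb' n (finite_wordBall S _)

theorem exists_finset_symmetric_generators {G : Type*} [Group G] (h : Group.FG G) :
    ∃ S : Finset G, (∀ s ∈ S, s⁻¹ ∈ S) ∧ Subgroup.closure (S : Set G) = ⊤ := by
  classical
  obtain ⟨S, hS⟩ := h.out
  refine ⟨S ∪ S.image (·⁻¹), ?_, ?_⟩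
  · intro s hs
    simp only [Finset.mem_union, Finset.mem_image] at hs ⊢
    rcases hs with hs | ⟨t, ht, rfl⟩
    · exact Or.inr ⟨s, hs, rfl⟩
    · left; rwa [inv_inv]
  · rw [eq_top_iff, ← hS]
    exact Subgroup.closure_mono (by simp)

/-- **Corollary 1.2(i)**: uniform lower bound for the algebraic entropy. -/
theorem algebraic_entropy_lower_bound
    (P₀ r₀ δ : ℝ) (hP₀ : 0 < P₀) (hr₀ : 0 < r₀) (hδ : 0 < δ) :
    ∃ C₀ : ℝ, 0 < C₀ ∧
      ∀ (X : Type*) [MetricSpace X] [CompleteSpace X] (σ : X → X → ℝ → X),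
        IsGCB σ → IsDeltaHyperbolic X δ → IsPacked X P₀ r₀ →
        ∀ Γ : Subgroup (X ≃ᵢ X), (∀ g ∈ Γ, IsSigmaIsometry σ g) →
          IsDiscreteSubgroup Γ → IsNonElementary Γ → Group.FG ↥Γ →
          C₀ ≤ sInf {E : ℝ | ∃ S : Finset ↥Γ,
            (∀ s ∈ S, s⁻¹ ∈ S) ∧ Subgroup.closure (S : Set ↥Γ) = ⊤ ∧
            E = Filter.limsup (fun n : ℕ =>
              Real.log ((Set.ncard {g : ↥Γ | ∃ L : List ↥Γ, L.length ≤ n ∧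
                (∀ u ∈ L, u ∈ S) ∧ g = L.prod} : ℕ) : ℝ) / (n : ℝ)) Filter.atTop} := by
  obtain ⟨m, hm, hgrowth⟩ := exists_uniform_growth P₀ r₀ δ hr₀ hδ
  refine ⟨Real.log 2 / m, div_pos (Real.log_pos one_lt_two) (by exact_mod_cast hm), ?_⟩
  intro X _ _ σ hσ hyp hpack Γ hΓσ hΓ hne hfg
  refine le_csInf ?_ ?_
  · obtain ⟨S, h1, h2⟩ := exists_finset_symmetric_generators hfg
    exact ⟨_, S, h1, h2, rfl⟩
  · rintro E ⟨S, h1, h2, rfl⟩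
    exact log_two_div_le_limsup S hm (hgrowth X σ hσ hyp hpack Γ hΓσ hΓ hne S h1 h2)
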